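/- arXiv:1510.03052 — 2 statements merged into one kernel-verified Lean document; each statement's English description precedes it below -/
import Mathlib

section
/- There are, up to isomorphism, exactly three (2)-bipancyclic graphs on 14 vertices with at most 19 edges. -/
open SimpleGraph

/-- The number of cycles of length `k` in `G`, counted as subgraphs of `G`
isomorphic to the cycle graph `C_k`. -/
noncomputable def cycleCount {V : Type*} (G : SimpleGraph V) (k : ℕ) : ℕ :=
  {H : G.Subgraph | Nonempty (H.coe ≃g cycleGraph k)}.ncard

/-- A bipartite graph on an even number `v ≥ 4` of vertices is `(r)`-bipancyclic if
it contains precisely `r` cycles of each even length from `4` to `v`. -/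
def IsRBipancyclic {V : Type*} [Fintype V] (G : SimpleGraph V) (r : ℕ) : Prop :=
  G.Colorable 2 ∧ Even (Fintype.card V) ∧ 4 ≤ Fintype.card V ∧
    ∀ k : ℕ, 4 ≤ k → k ≤ Fintype.card V → Even k → cycleCount G k = r

/-- There are, up to isomorphism, exactly `N` graphs on `v` vertices with at most
`b` edges satisfying the given pancyclicity property with parameter `r`. -/
def ExactlyNUpToIso (r N v b : ℕ) : Prop :=
  ∃ Gs : Fin N → SimpleGraph (Fin v),
    (∀ i j : Fin N, i ≠ j → IsEmpty (Gs i ≃g Gs j)) ∧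
    (∀ i : Fin N, IsRBipancyclic (Gs i) r ∧ (Gs i).edgeSet.ncard ≤ b) ∧
    (∀ (W : Type) [Fintype W] (G : SimpleGraph W), Fintype.card W = v →
      G.edgeSet.ncard ≤ b → IsRBipancyclic G r → ∃ i : Fin N, Nonempty (G ≃g Gs i))

/-!
A (2)-bipancyclic graph `G` of order 14 has a Hamiltonian cycle; label the vertices along it by
`Fin 14`. As `G` is bipartite, all further edges are chords of length 3, 5 or 7. Adding an edge
never destroys a cycle, and the cycles that it creates correspond to the paths between its ends, so
`G` can be built up from the Hamiltonian cycle one chord at a time, giving up as soon as some even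
length occurs more than twice. After a rotation one chord is `(0, 3)`, or `(0, 7)` when no chord has
length 3. The search leaves six graphs, all containing `(0, 3)`, which fall into three classes under
reflection; their second Zagreb indices are distinct.
-/

section CycleWalks

variable {V W : Type*} {G : SimpleGraph V} {G' : SimpleGraph W}

/-- The edge sets of the `k`-cycles of `G`, a `k`-cycle being a closed walk. -/
def cycleEdgeSets (G : SimpleGraph V) (k : ℕ) : Set (Set (Sym2 V)) :=
  {E | ∃ (u : V) (c : G.Walk u u), c.IsCycle ∧ c.length = k ∧ c.edgeSet = E}

lemma ncard_edgeSet_of_isTrail {u v : V} {p : G.Walk u v} (hp : p.IsTrail) :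
    p.edgeSet.ncard = p.length := by
  classical
  rw [← Walk.coe_edges_toFinset, Set.ncard_coe_finset, List.toFinset_card_of_nodup hp.edges_nodup,
    Walk.length_edges]

lemma ncard_edgeSet_cycleGraph (n : ℕ) : (cycleGraph (n + 3)).edgeSet.ncard = n + 3 := by
  have h := sum_degrees_eq_twice_card_edges (cycleGraph (n + 3))
  simp only [cycleGraph_degree_three_le, Finset.sum_const, Finset.card_univ, Fintype.card_fin,
    smul_eq_mul] at h
  rw [← coe_edgeFinset, Set.ncard_coe_finset]
  omega

lemma edgeSet_of_isCycle_of_length_eq {n : ℕ} {u : Fin (n + 3)}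
    {c : (cycleGraph (n + 3)).Walk u u} (hc : c.IsCycle) (hlen : c.length = n + 3) :
    c.edgeSet = (cycleGraph (n + 3)).edgeSet :=
  Set.eq_of_subset_of_ncard_le c.edges_subset_edgeSet <| by
    rw [ncard_edgeSet_of_isTrail hc.isTrail, ncard_edgeSet_cycleGraph, hlen]

lemma edgeSet_toSubgraph (f : Copy G G') : f.toSubgraph.edgeSet = Sym2.map f '' G.edgeSet := by
  rw [Copy.toSubgraph, Subgraph.edgeSet_map, Subgraph.edgeSet_top]
  rfl

lemma toSubgraph_injOn_edgeSet (hG : ∀ x, ∃ y, G.Adj x y) :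
    Set.InjOn Subgraph.edgeSet (Set.range (Copy.toSubgraph : Copy G G' → G'.Subgraph)) := by
  have verts_eq {H : G'.Subgraph} (hH : H ∈ Set.range (Copy.toSubgraph : Copy G G' → _)) :
      H.verts = {x | ∃ e ∈ H.edgeSet, x ∈ e} := by
    obtain ⟨f, rfl⟩ := hH
    ext x
    refine ⟨?_, fun ⟨e, he, hx⟩ => f.toSubgraph.mem_verts_of_mem_edge he hx⟩
    rintro ⟨a, -, rfl⟩
    obtain ⟨b, hab⟩ := hG a
    exact ⟨s(f a, f b), ⟨a, b, hab, rfl, rfl⟩, Sym2.mem_mk_left _ _⟩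
  intro H hH H' hH' h
  refine Subgraph.ext (by rw [verts_eq hH, verts_eq hH', h]) ?_
  ext x y
  rw [← Subgraph.mem_edgeSet, h, Subgraph.mem_edgeSet]

lemma cycleEdgeSets_eq_range (G : SimpleGraph V) (n : ℕ) :
    cycleEdgeSets G (n + 3) =
      Set.range fun f : Copy (cycleGraph (n + 3)) G => f.toSubgraph.edgeSet := by
  ext E
  constructor
  · rintro ⟨u, c, hc, hlen, rfl⟩
    have hE : ∀ e ∈ c.edges, e ∈ (fromEdgeSet c.edgeSet).edgeSet := fun e he => by
      rw [edgeSet_fromEdgeSet]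
      exact ⟨he, G.not_isDiag_of_mem_edgeSet (c.edges_subset_edgeSet he)⟩
    obtain ⟨f⟩ := (cycleGraph_isContained_iff (by omega)).2
      ⟨u, c.transfer _ hE, hc.transfer hE, (c.length_transfer hE).trans hlen⟩
    have hle : fromEdgeSet c.edgeSet ≤ G := (fromEdgeSet_mono c.edges_subset_edgeSet).trans_eq
      (fromEdgeSet_edgeSet G)
    let g : Copy (cycleGraph (n + 3)) G := (Copy.ofLE _ _ hle).comp f
    refine ⟨g, (edgeSet_toSubgraph g).trans ?_⟩
    refine Set.eq_of_subset_of_ncard_le ?_ ?_ c.edges.finite_toSet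
    · rintro _ ⟨e, he, rfl⟩
      exact (edgeSet_fromEdgeSet c.edgeSet ▸ f.toHom.map_mem_edgeSet he).1
    · have hg : Function.Injective (Sym2.map g) := Sym2.map.injective g.injective
      rw [Set.ncard_image_of_injective _ hg,
        ncard_edgeSet_cycleGraph, ncard_edgeSet_of_isTrail hc.isTrail, hlen]
  · rintro ⟨f, rfl⟩
    refine ⟨_, (cycleGraph.cycle n).map f.toHom, cycleGraph.isCycle_cycle.map f.injective,
      by rw [Walk.length_map, cycleGraph.length_cycle], ?_⟩
    rw [Walk.edgeSet_map, edgeSet_of_isCycle_of_length_eq cycleGraph.isCycle_cycle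
      cycleGraph.length_cycle]
    exact (edgeSet_toSubgraph f).symm

theorem cycleCount_eq_ncard_cycleEdgeSets {k : ℕ} (hk : 3 ≤ k) (G : SimpleGraph V) :
    cycleCount G k = (cycleEdgeSets G k).ncard := by
  obtain ⟨n, rfl⟩ := Nat.exists_eq_add_of_le' hk
  have hrange : {H : G.Subgraph | Nonempty (H.coe ≃g cycleGraph (n + 3))} =
      Set.range (Copy.toSubgraph : Copy (cycleGraph (n + 3)) G → G.Subgraph) := by
    rw [Copy.range_toSubgraph]
    ext H
    exact ⟨fun ⟨e⟩ => ⟨e.symm⟩, fun ⟨e⟩ => ⟨e.symm⟩⟩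
  have hadj (x : Fin (n + 3)) : ∃ y, (cycleGraph (n + 3)).Adj x y :=
    ⟨x + 1, by simp [cycleGraph_adj]⟩
  rw [cycleCount, hrange, cycleEdgeSets_eq_range, ← (toSubgraph_injOn_edgeSet hadj).ncard_image,
    ← Set.range_comp]
  rfl

theorem cycleCount_le_of_isContained [Finite W] (h : G ⊑ G') {k : ℕ} (hk : 3 ≤ k) :
    cycleCount G k ≤ cycleCount G' k := by
  obtain ⟨f⟩ := h
  rw [cycleCount_eq_ncard_cycleEdgeSets hk, cycleCount_eq_ncard_cycleEdgeSets hk]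
  refine Set.ncard_le_ncard_of_injOn (Sym2.map f '' ·) ?_
    (Set.image_injective.2 (Sym2.map.injective f.injective)).injOn
  rintro _ ⟨u, c, hc, hlen, rfl⟩
  exact ⟨f u, c.map f.toHom, hc.map f.injective, by rw [Walk.length_map, hlen],
    Walk.edgeSet_map f.toHom c⟩

theorem cycleCount_eq_of_iso [Finite V] [Finite W] (e : G ≃g G') {k : ℕ} (hk : 3 ≤ k) :
    cycleCount G k = cycleCount G' k :=
  (cycleCount_le_of_isContained e.isContained hk).antisymm
    (cycleCount_le_of_isContained e.symm.isContained hk)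

end CycleWalks

section AddEdge

variable {V : Type*} {G : SimpleGraph V} {u v : V}

lemma insert_injOn_notMem {α : Type*} (a : α) : Set.InjOn (insert a) {s : Set α | a ∉ s} :=
  fun s hs t ht h => by
    rw [← Set.insert_sdiff_self_of_notMem hs, h, Set.insert_sdiff_self_of_notMem ht]

lemma snd_eq_or_penultimate_eq_of_mem_edges {c : G.Walk u u} (hc : c.IsCycle)
    (he : s(u, v) ∈ c.edges) : c.snd = v ∨ c.penultimate = v := by
  cases c with
  | nil => simp at he
  | cons h p =>
    have hp : p.IsPath := ((Walk.cons_isCycle_iff p h).1 hc).1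
    rw [Walk.edges_cons, List.mem_cons, Sym2.congr_right] at he
    obtain rfl | he := he
    · exact .inl (Walk.snd_cons p h)
    · rw [Walk.penultimate_cons_of_not_nil _ _ (Walk.not_nil_of_isCycle_cons hc)]
      exact .inr (hp.eq_penultimate_of_mem_edges he).symm

lemma exists_cons_isCycle_of_mem_edges {x : V} {c : G.Walk x x} (hc : c.IsCycle)
    (he : s(u, v) ∈ c.edges) :
    ∃ (h : G.Adj v u) (p : G.Walk u v), (p.cons h).IsCycle ∧
      (p.cons h).length = c.length ∧ (p.cons h).edgeSet = c.edgeSet := by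
  classical
  have of_snd {d : G.Walk v v} (hd : d.IsCycle) (hsnd : d.snd = u) :
      ∃ (h : G.Adj v u) (p : G.Walk u v), p.cons h = d := by
    subst hsnd
    exact ⟨d.adj_snd hd.not_nil, d.tail, d.cons_tail_eq hd.not_nil⟩
  have hv : v ∈ c.support := c.snd_mem_support_of_mem_edges he
  have mem_rotate (e : Sym2 V) : e ∈ (c.rotate v hv).edges ↔ e ∈ c.edges :=
    (c.rotate_edges v hv).mem_iff
  have hrot : (c.rotate v hv).edgeSet = c.edgeSet := Set.ext mem_rotate
  obtain hsnd | hpen := snd_eq_or_penultimate_eq_of_mem_edges (hc.rotate hv)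
    ((mem_rotate _).2 (Sym2.eq_swap ▸ he))
  · obtain ⟨h, p, hp⟩ := of_snd (hc.rotate hv) hsnd
    exact ⟨h, p, hp ▸ hc.rotate hv, by rw [hp, Walk.length_rotate], by rw [hp, hrot]⟩
  · obtain ⟨h, p, hp⟩ := of_snd (hc.rotate hv).reverse ((Walk.snd_reverse _).trans hpen)
    exact ⟨h, p, hp ▸ (hc.rotate hv).reverse, by rw [hp, Walk.length_reverse, Walk.length_rotate],
      by rw [hp, Walk.edgeSet_reverse, hrot]⟩

lemma notMem_edgeSet_of_isPath_cons {w : V} {h : G.Adj u w} {p : G.Walk w v}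
    (hp : (p.cons h).IsPath) : s(u, w) ∉ p.edgeSet := fun he =>
  ((Walk.cons_isPath_iff h p).1 hp).2 (p.fst_mem_support_of_mem_edges he)

lemma isPath_injOn_edgeSet : Set.InjOn Walk.edgeSet {p : G.Walk u v | p.IsPath} := by
  intro p hp q hq h
  induction p with
  | nil => exact (Walk.isPath_iff_nil.1 hq).eq_nil.symm
  | @cons u w v a p ih =>
    cases q with
    | nil => exact (Walk.isPath_iff_nil.1 hp).eq_nil
    | @cons _ w' _ b q =>
      have hmem : s(u, w) ∈ (q.cons b).edgeSet := h ▸ List.mem_cons_self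
      obtain rfl : w = w' := (Walk.IsPath.eq_snd_of_mem_edges hq hmem).trans
        (Walk.snd_cons q b)
      rw [Walk.edgeSet_cons, Walk.edgeSet_cons] at h
      rw [ih hp.of_cons hq.of_cons (insert_injOn_notMem _ (notMem_edgeSet_of_isPath_cons hp)
        (notMem_edgeSet_of_isPath_cons hq) h)]

lemma cycleEdgeSets_sup_edge (huv : u ≠ v) (h : ¬ G.Adj u v) (k : ℕ) :
    cycleEdgeSets (G ⊔ edge u v) (k + 1) = cycleEdgeSets G (k + 1) ∪
      (insert s(u, v) ·) '' (Walk.edgeSet '' {p : G.Walk u v | p.IsPath ∧ p.length = k}) := by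
  have hadj : (G ⊔ edge u v).Adj v u := by simp [edge_adj, huv.symm]
  have mem_G {e : Sym2 V} (he : e ∈ (G ⊔ edge u v).edgeSet) (hne : e ≠ s(u, v)) :
      e ∈ G.edgeSet := by
    rw [edgeSet_sup, edgeSet_edge_of_ne huv] at he
    exact he.resolve_right hne
  have notMem {x y : V} (p : G.Walk x y) : s(u, v) ∉ p.edges := fun he => h (p.adj_of_mem_edges he)
  ext E
  constructor
  · rintro ⟨x, c, hc, hlen, rfl⟩
    by_cases he : s(u, v) ∈ c.edges
    · obtain ⟨_, p, hp, hlen', hE⟩ := exists_cons_isCycle_of_mem_edges hc he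
      obtain ⟨hpath, hnot⟩ := (Walk.cons_isCycle_iff p _).1 hp
      have hpG : ∀ e ∈ p.edges, e ∈ G.edgeSet := fun e hmem =>
        mem_G (p.edges_subset_edgeSet hmem) fun heq => hnot (by rwa [Sym2.eq_swap, ← heq])
      refine .inr ⟨_, ⟨p.transfer G hpG, ⟨hpath.transfer hpG, ?_⟩, rfl⟩, ?_⟩
      · rw [Walk.length_transfer]
        exact Nat.succ_injective (hlen'.trans hlen)
      · rw [← hE, Walk.edgeSet_transfer, Walk.edgeSet_cons, Sym2.eq_swap]
    · have hcG : ∀ e ∈ c.edges, e ∈ G.edgeSet := fun e hmem =>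
        mem_G (c.edges_subset_edgeSet hmem) (ne_of_mem_of_not_mem hmem he)
      exact .inl ⟨x, c.transfer G hcG, hc.transfer hcG, by rw [Walk.length_transfer, hlen],
        Walk.edgeSet_transfer c hcG⟩
  · rintro (⟨x, c, hc, hlen, rfl⟩ | ⟨_, ⟨p, ⟨hp, hlen⟩, rfl⟩, rfl⟩)
    · exact ⟨x, c.mapLe le_sup_left, hc.mapLe le_sup_left, by rw [Walk.length_mapLe, hlen],
        Walk.edgeSet_mapLe_eq_edgeSet _ c⟩
    · refine ⟨v, (p.mapLe le_sup_left).cons hadj, ?_, ?_, ?_⟩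
      · rw [Walk.cons_isCycle_iff, Walk.edges_mapLe_eq_edges, Sym2.eq_swap]
        exact ⟨hp.mapLe le_sup_left, notMem p⟩
      · rw [Walk.length_cons, Walk.length_mapLe, hlen]
      · rw [Walk.edgeSet_cons, Walk.edgeSet_mapLe_eq_edgeSet, Sym2.eq_swap]

theorem cycleCount_sup_edge [Finite V] (huv : u ≠ v) (h : ¬ G.Adj u v) {k : ℕ} (hk : 2 ≤ k) :
    cycleCount (G ⊔ edge u v) (k + 1) =
      cycleCount G (k + 1) + {p : G.Walk u v | p.IsPath ∧ p.length = k}.ncard := by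
  have notMem {E : Set (Sym2 V)} (hE : E ∈ cycleEdgeSets G (k + 1) ∪
      Walk.edgeSet '' {p : G.Walk u v | p.IsPath ∧ p.length = k}) : s(u, v) ∉ E := by
    intro he
    obtain ⟨x, c, -, -, rfl⟩ | ⟨p, -, rfl⟩ := hE
    · exact h (c.adj_of_mem_edges he)
    · exact h (p.adj_of_mem_edges he)
  have hdisj : Disjoint (cycleEdgeSets G (k + 1)) ((insert s(u, v) ·) ''
      (Walk.edgeSet '' {p : G.Walk u v | p.IsPath ∧ p.length = k})) := by
    rw [Set.disjoint_right]
    rintro _ ⟨E, -, rfl⟩ hE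
    exact notMem (.inl hE) (Set.mem_insert _ _)
  have hinj := (insert_injOn_notMem s(u, v)).mono fun E hE => notMem (.inr hE)
  rw [cycleCount_eq_ncard_cycleEdgeSets (by omega), cycleCount_eq_ncard_cycleEdgeSets (by omega),
    cycleEdgeSets_sup_edge huv h, Set.ncard_union_eq hdisj, hinj.ncard_image,
    (isPath_injOn_edgeSet.mono fun p hp => hp.1).ncard_image]

end AddEdge

section EdgeLists

variable {V : Type*}

/-- The graph whose edges are the pairs in `L`, each taken without orientation. -/
def fromEdges (L : List (V × V)) : SimpleGraph V := fromRel fun x y => (x, y) ∈ L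

/-- `L` lists each edge of `fromEdges L` exactly once, in one of its two orientations, and contains
no loops. -/
def IsSimpleList (L : List (V × V)) : Prop :=
  (L.map fun e => s(e.1, e.2)).Nodup ∧ ∀ e ∈ L, e.1 ≠ e.2

lemma fromEdges_adj {L : List (V × V)} {x y : V} :
    (fromEdges L).Adj x y ↔ x ≠ y ∧ ((x, y) ∈ L ∨ (y, x) ∈ L) :=
  fromRel_adj _ x y

lemma fromEdges_cons (e : V × V) (L : List (V × V)) :
    fromEdges (e :: L) = fromEdges L ⊔ edge e.1 e.2 := by
  ext x y
  simp only [fromEdges_adj, sup_adj, edge_adj, List.mem_cons, Prod.ext_iff]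
  tauto

lemma fromEdges_cons_le {G : SimpleGraph V} {e : V × V} {L : List (V × V)} (hLG : fromEdges L ≤ G)
    (he : G.Adj e.1 e.2) : fromEdges (e :: L) ≤ G :=
  fromEdges_cons e L ▸ sup_le hLG ((edge_le_iff G).2 (.inr he))

lemma fromEdges_mono {L L' : List (V × V)} (h : L ⊆ L') : fromEdges L ≤ fromEdges L' :=
  fun _ _ hxy => fromEdges_adj.2 <| (fromEdges_adj.1 hxy).imp_right (Or.imp (@h _) (@h _))

lemma le_fromEdges_filter_append {G : SimpleGraph V} {L rest : List (V × V)}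
    (hG : G ≤ fromEdges (rest ++ L)) {P : V × V → Prop} [DecidablePred P]
    (hP : ∀ e, G.Adj e.1 e.2 → ¬ (fromEdges L).Adj e.1 e.2 → P e) :
    G ≤ fromEdges (rest.filter P ++ L) := by
  intro x y hxy
  by_cases hL : (fromEdges L).Adj x y
  · exact fromEdges_mono (List.subset_append_right _ L) hL
  have hPxy : P (x, y) := hP _ hxy hL
  have hPyx : P (y, x) := hP _ hxy.symm fun h => hL h.symm
  have hmem := hG hxy
  simp only [fromEdges_adj, List.mem_append, List.mem_filter, decide_eq_true_eq] at hmem ⊢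
  tauto

lemma exists_cons_suffix_of_ne {G : SimpleGraph V} {L rest : List (V × V)}
    (hLG : fromEdges L ≤ G) (hne : fromEdges L ≠ G) (hG : G ≤ fromEdges (rest ++ L)) :
    ∃ e rest', e :: rest' <:+ rest ∧ (G.Adj e.1 e.2 ∧ ¬ (fromEdges L).Adj e.1 e.2) ∧
      G ≤ fromEdges (rest' ++ e :: L) := by
  induction rest with
  | nil => exact absurd (hLG.antisymm hG) hne
  | cons a rest ih =>
    by_cases ha : G.Adj a.1 a.2 ∧ ¬ (fromEdges L).Adj a.1 a.2
    · exact ⟨a, rest, List.suffix_rfl, ha, hG.trans (fromEdges_mono List.perm_middle.symm.subset)⟩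
    · have hskip : G ≤ fromEdges (rest ++ L) := by
        intro x y hxy
        rcases (fromEdges_cons a (rest ++ L) ▸ hG) hxy with hadj | hedge
        · exact hadj
        have haG : G.Adj a.1 a.2 := by
          obtain ⟨⟨rfl, rfl⟩ | ⟨rfl, rfl⟩, -⟩ := (edge_adj ..).1 hedge
          exacts [hxy, hxy.symm]
        have haL : (fromEdges L).Adj a.1 a.2 := of_not_not fun h => ha ⟨haG, h⟩
        exact fromEdges_mono (List.subset_append_right _ L) ((edge_le_iff _).2 (.inr haL) hedge)
      obtain ⟨e, rest', hsuff, he⟩ := ih hskip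
      exact ⟨e, rest', hsuff.trans (List.suffix_cons a rest), he⟩

lemma mem_map_mk_iff {L : List (V × V)} {x y : V} :
    s(x, y) ∈ L.map (fun e => s(e.1, e.2)) ↔ (x, y) ∈ L ∨ (y, x) ∈ L := by
  simp only [List.mem_map, Sym2.eq_iff, Prod.exists]
  aesop

lemma edgeSet_fromEdges {L : List (V × V)} (hL : IsSimpleList L) :
    (fromEdges L).edgeSet = {e | e ∈ L.map fun e => s(e.1, e.2)} := by
  ext ⟨x, y⟩
  rw [mem_edgeSet, fromEdges_adj, Set.mem_ofPred_eq, mem_map_mk_iff, and_iff_right_iff_imp]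
  rintro (h | h)
  exacts [hL.2 _ h, (hL.2 _ h).symm]

lemma ncard_edgeSet_fromEdges {L : List (V × V)} (hL : IsSimpleList L) :
    (fromEdges L).edgeSet.ncard = L.length := by
  classical
  rw [edgeSet_fromEdges hL, ← List.coe_toFinset, Set.ncard_coe_finset,
    List.toFinset_card_of_nodup hL.1, List.length_map]

lemma isSimpleList_cons {e : V × V} {L : List (V × V)} :
    IsSimpleList (e :: L) ↔ (e.1 ≠ e.2 ∧ ¬ (fromEdges L).Adj e.1 e.2) ∧ IsSimpleList L := by
  rw [IsSimpleList, IsSimpleList, List.map_cons, List.nodup_cons, List.forall_mem_cons,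
    mem_map_mk_iff, fromEdges_adj]
  tauto

variable [DecidableEq V]

instance (L : List (V × V)) : DecidableRel (fromEdges L).Adj :=
  inferInstanceAs (DecidableRel (fromRel fun x y => (x, y) ∈ L).Adj)

instance (L : List (V × V)) : Decidable (IsSimpleList L) :=
  inferInstanceAs (Decidable (_ ∧ _))

/-- The neighbours of `x` in `fromEdges L`. -/
def neighborList (L : List (V × V)) (x : V) : List V :=
  L.filterMap fun e => if e.1 = x then some e.2 else if e.2 = x then some e.1 else none

lemma mem_neighborList {L : List (V × V)} (hL : IsSimpleList L) {x y : V} :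
    y ∈ neighborList L x ↔ (fromEdges L).Adj x y := by
  rw [← mem_edgeSet, edgeSet_fromEdges hL, Set.mem_ofPred_eq, mem_map_mk_iff, neighborList,
    List.mem_filterMap]
  constructor
  · rintro ⟨⟨a, b⟩, hmem, h⟩
    grind
  · rintro (h | h)
    · exact ⟨_, h, if_pos rfl⟩
    · exact ⟨_, h, by rw [if_neg (hL.2 _ h), if_pos rfl]⟩

lemma nodup_neighborList {L : List (V × V)} (hL : IsSimpleList L) (x : V) :
    (neighborList L x).Nodup := by
  induction L with
  | nil => exact List.nodup_nil
  | cons e L ih =>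
    obtain ⟨⟨-, hadj⟩, hL⟩ := isSimpleList_cons.1 hL
    rw [neighborList, List.filterMap_cons]
    split
    · exact ih hL
    · next y hy =>
      refine List.nodup_cons.2 ⟨fun hmem => hadj ?_, ih hL⟩
      have hxy := (mem_neighborList hL).1 hmem
      split_ifs at hy with h1 h2
      · cases hy; subst h1; exact hxy
      · cases hy; subst h2; exact hxy.symm

/-- The vertex sequences of the paths of `fromEdges L` from `x` to `v` that avoid `visited` and have
fewer than `fuel` edges. -/
def paths (L : List (V × V)) (v : V) : (fuel : ℕ) → (visited : List V) → (x : V) → List (List V)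
  | 0, _, _ => []
  | fuel + 1, visited, x =>
    if x = v then [[v]] else
      ((neighborList L x).filter (· ∉ x :: visited)).flatMap fun y =>
        (paths L v fuel (x :: visited) y).map (x :: ·)

lemma mem_paths {L : List (V × V)} (hL : IsSimpleList L) {v : V} {fuel : ℕ} {visited : List V}
    {x : V} (hx : x ∉ visited) {p : List V} :
    p ∈ paths L v fuel visited x ↔ ∃ q : (fromEdges L).Walk x v,
      q.IsPath ∧ q.length < fuel ∧ (∀ y ∈ q.support, y ∉ visited) ∧ q.support = p := by
  induction fuel generalizing visited x p with
  | zero => simp [paths]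
  | succ fuel ih =>
    rw [paths]
    split_ifs with hxv
    · subst hxv
      rw [List.mem_singleton]
      constructor
      · rintro rfl
        exact ⟨.nil, .nil, Nat.succ_pos _, by simpa using hx, rfl⟩
      · rintro ⟨q, hq, -, -, rfl⟩
        rw [(Walk.isPath_iff_nil.1 hq).eq_nil, Walk.support_nil]
    · simp only [List.mem_flatMap, List.mem_filter, decide_eq_true_eq, List.mem_map,
        mem_neighborList hL]
      constructor
      · rintro ⟨y, ⟨hadj, hy⟩, _, hp, rfl⟩
        obtain ⟨q, hq, hlen, hav, rfl⟩ := (ih hy).1 hp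
        refine ⟨q.cons hadj, (Walk.cons_isPath_iff _ _).2 ⟨hq, fun h => hav x h List.mem_cons_self⟩,
          Nat.succ_lt_succ hlen, ?_, rfl⟩
        rw [Walk.support_cons, List.forall_mem_cons]
        exact ⟨hx, fun z hz hz' => hav z hz (List.mem_cons_of_mem _ hz')⟩
      · rintro ⟨q, hq, hlen, hav, rfl⟩
        cases q with
        | nil => exact absurd rfl hxv
        | @cons _ y _ hadj q =>
          obtain ⟨hq, hxq⟩ := (Walk.cons_isPath_iff _ _).1 hq
          rw [Walk.support_cons, List.forall_mem_cons] at hav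
          have hav' : ∀ z ∈ q.support, z ∉ x :: visited := fun z hz =>
            List.not_mem_cons_of_ne_of_not_mem (ne_of_mem_of_not_mem hz hxq) (hav.2 z hz)
          have hy := hav' y q.start_mem_support
          exact ⟨y, ⟨hadj, hy⟩, _, (ih hy).2 ⟨q, hq, Nat.lt_of_succ_lt_succ hlen, hav', rfl⟩, rfl⟩

lemma nodup_paths {L : List (V × V)} (hL : IsSimpleList L) {v : V} {fuel : ℕ} {visited : List V}
    {x : V} : (paths L v fuel visited x).Nodup := by
  induction fuel generalizing visited x with
  | zero => exact List.nodup_nil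
  | succ fuel ih =>
    rw [paths]
    split_ifs
    · exact List.nodup_singleton _
    refine List.nodup_flatMap.2 ⟨fun y _ => ih.map (List.cons_injective), ?_⟩
    refine ((nodup_neighborList hL x).filter _).pairwise_of_forall_ne fun y hy z hz hyz => ?_
    rw [Function.onFun, List.disjoint_left]
    simp only [List.mem_map, not_exists, not_and]
    rintro _ ⟨p, hp, rfl⟩ p' hp' heq
    obtain rfl := List.cons_injective heq
    rw [List.mem_filter, decide_eq_true_eq] at hy hz
    obtain ⟨q, -, -, -, rfl⟩ := (mem_paths hL hy.2).1 hp
    obtain ⟨q', -, -, -, hq'⟩ := (mem_paths hL hz.2).1 hp'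
    exact hyz (by rw [← q.head_support, ← q'.head_support]; simp only [hq'])

/-- The lengths of the cycles that the edge `e` closes in `fromEdges L`: a path between its ends
with `m` vertices becomes an `m`-cycle. Here `n` bounds the number of vertices. -/
def newCycleLengths (n : ℕ) (L : List (V × V)) (e : V × V) : List ℕ :=
  (paths L e.2 n [] e.1).map List.length

/-- The lengths of all cycles of `fromEdges L`, with multiplicity. Here `n` bounds the number of
vertices. -/
def cycleLengths (n : ℕ) : List (V × V) → List ℕ
  | [] => []
  | e :: L => newCycleLengths n L e ++ cycleLengths n L

variable [Fintype V] {n : ℕ}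

lemma ncard_isPath_eq_count {L : List (V × V)} (hL : IsSimpleList L) (hn : Fintype.card V ≤ n)
    (e : V × V) (k : ℕ) :
    {p : (fromEdges L).Walk e.1 e.2 | p.IsPath ∧ p.length = k}.ncard =
      (newCycleLengths n L e).count (k + 1) := by
  have himage : Walk.support '' {p : (fromEdges L).Walk e.1 e.2 | p.IsPath ∧ p.length = k} =
      ((paths L e.2 n [] e.1).filter (·.length = k + 1)).toFinset := by
    ext l
    simp only [Set.mem_image, Set.mem_ofPred_eq, List.coe_toFinset, List.mem_filter,
      decide_eq_true_eq, mem_paths hL List.not_mem_nil]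
    constructor
    · rintro ⟨p, ⟨hp, hk⟩, rfl⟩
      exact ⟨⟨p, hp, hp.length_lt.trans_le hn, fun _ _ => List.not_mem_nil, rfl⟩,
        by rw [p.length_support, hk]⟩
    · rintro ⟨⟨p, hp, -, -, rfl⟩, hk⟩
      exact ⟨p, ⟨hp, Nat.succ_injective (p.length_support.symm.trans hk)⟩, rfl⟩
  have hinj : Function.Injective (Walk.support : (fromEdges L).Walk e.1 e.2 → List V) :=
    fun _ _ => Walk.ext_support
  rw [← Set.ncard_image_of_injective _ hinj, himage, Set.ncard_coe_finset,
    List.toFinset_card_of_nodup ((nodup_paths hL).filter _), newCycleLengths, List.count,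
    List.countP_map, List.countP_eq_length_filter]
  rfl

theorem cycleCount_fromEdges {L : List (V × V)} (hL : IsSimpleList L) (hn : Fintype.card V ≤ n)
    {k : ℕ} (hk : 3 ≤ k) : cycleCount (fromEdges L) k = (cycleLengths n L).count k := by
  induction L with
  | nil =>
    have hbot : cycleEdgeSets (fromEdges ([] : List (V × V))) k = ∅ := by
      refine Set.eq_empty_of_forall_notMem ?_
      rintro _ ⟨u, c, hc, -, -⟩
      simpa [fromEdges_adj] using c.adj_snd hc.not_nil
    rw [cycleCount_eq_ncard_cycleEdgeSets hk, hbot, Set.ncard_empty]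
    rfl
  | cons e L ih =>
    obtain ⟨⟨hne, hadj⟩, hL⟩ := isSimpleList_cons.1 hL
    obtain ⟨m, rfl⟩ := Nat.exists_eq_add_of_le' (show 1 ≤ k by omega)
    rw [fromEdges_cons, cycleCount_sup_edge hne hadj (by omega), ih hL,
      ncard_isPath_eq_count hL hn, cycleLengths, List.count_append, add_comm]

end EdgeLists

section Search

variable {V : Type*} [DecidableEq V]

/-- Given `c = cycleLengths n L`, the edge `e` is not in `fromEdges L` and adding it leaves at most
`r` cycles of each length in `ks`. -/
def IsAdmissible (n r : ℕ) (ks : List ℕ) (L : List (V × V)) (c : List ℕ) (e : V × V) : Prop :=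
  (e.1 ≠ e.2 ∧ ¬ (fromEdges L).Adj e.1 e.2) ∧
    ∀ k ∈ ks, (newCycleLengths n L e ++ c).count k ≤ r

instance (n r : ℕ) (ks : List ℕ) (L : List (V × V)) (c : List ℕ) :
    DecidablePred (IsAdmissible n r ks L c) :=
  fun _ => inferInstanceAs (Decidable (_ ∧ _))

/-- Given `c = cycleLengths n L`, the extensions of `L` by edges from `rest` that have exactly `r`
cycles of each length in `ks`. At most `fuel - 1` edges are added. Adding edges never destroys a
cycle, so edges that are not admissible are discarded for good. -/
def extensions (n r : ℕ) (ks : List ℕ) :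
    (fuel : ℕ) → (rest L : List (V × V)) → (c : List ℕ) → List (List (V × V))
  | 0, _, _, _ => []
  | fuel + 1, rest, L, c =>
    (if ∀ k ∈ ks, c.count k = r then [L] else []) ++
      (rest.filter (IsAdmissible n r ks L c)).tails.flatMap fun
        | [] => []
        | e :: rest' => extensions n r ks fuel rest' (e :: L) (newCycleLengths n L e ++ c)

variable [Fintype V] {n r : ℕ} {ks : List ℕ} {G : SimpleGraph V}

lemma isAdmissible_of_fromEdges_le (hn : Fintype.card V ≤ n) (hks : ∀ k ∈ ks, 3 ≤ k)
    (hG : ∀ k ∈ ks, cycleCount G k = r) {L : List (V × V)} (hL : IsSimpleList L)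
    (hLG : fromEdges L ≤ G) {e : V × V} (he : G.Adj e.1 e.2)
    (heL : ¬ (fromEdges L).Adj e.1 e.2) : IsAdmissible n r ks L (cycleLengths n L) e := by
  refine ⟨⟨he.ne, heL⟩, fun k hk => ?_⟩
  rw [← hG k hk, ← cycleLengths, ← cycleCount_fromEdges (isSimpleList_cons.2 ⟨⟨he.ne, heL⟩, hL⟩) hn
    (hks k hk)]
  exact cycleCount_le_of_isContained (.of_le (fromEdges_cons_le hLG he)) (hks k hk)

theorem exists_mem_extensions (hn : Fintype.card V ≤ n) (hks : ∀ k ∈ ks, 3 ≤ k)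
    (hG : ∀ k ∈ ks, cycleCount G k = r) {fuel : ℕ} {rest L : List (V × V)}
    (hfuel : rest.length < fuel) (hL : IsSimpleList L) (hLG : fromEdges L ≤ G)
    (hGL : G ≤ fromEdges (rest ++ L)) :
    ∃ L' ∈ extensions n r ks fuel rest L (cycleLengths n L), fromEdges L' = G := by
  induction fuel generalizing rest L with
  | zero => exact absurd hfuel (Nat.not_lt_zero _)
  | succ fuel ih =>
    rw [extensions]
    by_cases heq : fromEdges L = G
    · refine ⟨L, List.mem_append_left _ ?_, heq⟩
      rw [if_pos, List.mem_singleton]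
      intro k hk
      rw [← cycleCount_fromEdges hL hn (hks k hk), heq, hG k hk]
    have hfilter := le_fromEdges_filter_append hGL
      fun _ => isAdmissible_of_fromEdges_le hn hks hG hL hLG
    obtain ⟨e, rest', hsuff, ⟨he, heL⟩, hGL'⟩ := exists_cons_suffix_of_ne hLG heq hfilter
    have hlen : rest'.length < fuel := by
      have := hsuff.length_le.trans (List.length_filter_le _ rest)
      rw [List.length_cons] at this
      omega
    obtain ⟨L', hL', rfl⟩ :=
      ih hlen (isSimpleList_cons.2 ⟨⟨he.ne, heL⟩, hL⟩) (fromEdges_cons_le hLG he) hGL'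
    exact ⟨L', List.mem_append_right _ (List.mem_flatMap.2
      ⟨e :: rest', (List.mem_tails _ _).2 hsuff, hL'⟩), rfl⟩

end Search

section Labelling

lemma mod_two_ne_of_adj {n : ℕ} {G : SimpleGraph (Fin n)} (hpath : pathGraph n ≤ G)
    (hG : G.Colorable 2) {x y : Fin n} (hxy : G.Adj x y) : (x : ℕ) % 2 ≠ y % 2 := by
  let C : G.Coloring Bool := hG.toColoring (by simp)
  have hC (m : ℕ) (hm : m < n) : C ⟨m, hm⟩ = (C ⟨0, by omega⟩ ^^ m.bodd) := by
    induction m with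
    | zero => simp
    | succ m ih =>
      have hne : C ⟨m, by omega⟩ ≠ C ⟨m + 1, hm⟩ :=
        C.valid (hpath (pathGraph_adj.2 (.inl rfl)))
      rw [Nat.bodd_succ, Bool.xor_not, ← ih (by omega)]
      exact Bool.eq_not_of_ne hne.symm
  intro hmod
  refine C.valid hxy ?_
  have hbodd : (x : ℕ).bodd = (y : ℕ).bodd := by grind [Nat.mod_two_of_bodd, Bool.toNat]
  rw [hC x x.2, hC y y.2, hbodd]

lemma exists_iso_cycleGraph_le {W : Type*} [Fintype W] {G : SimpleGraph W} {n : ℕ}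
    (hW : Fintype.card W = n) (hG : cycleCount G n ≠ 0) :
    ∃ G' : SimpleGraph (Fin n), Nonempty (G ≃g G') ∧ cycleGraph n ≤ G' := by
  obtain ⟨H, ⟨e⟩⟩ := Set.nonempty_of_ncard_ne_zero hG
  have hbij : Function.Bijective fun i => (e.symm i : W) :=
    (Fintype.bijective_iff_injective_and_card _).2
      ⟨Subtype.val_injective.comp e.symm.injective, by rw [Fintype.card_fin, hW]⟩
  exact ⟨G.comap (Equiv.ofBijective _ hbij), ⟨(Iso.comap _ G).symm⟩,
    fun i j hij => H.adj_sub (e.symm.map_adj_iff.2 hij)⟩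

lemma isRBipancyclic_of_iso {V W : Type*} [Fintype V] [Fintype W] {G : SimpleGraph V}
    {G' : SimpleGraph W} {r : ℕ} (e : G ≃g G') (hG : IsRBipancyclic G r) :
    IsRBipancyclic G' r := by
  obtain ⟨hcol, heven, hcard, hcount⟩ := hG
  rw [e.card_eq] at heven hcard hcount
  refine ⟨hcol.of_hom e.symm.toHom, heven, hcard, fun k hk hkW hk2 => ?_⟩
  rw [← cycleCount_eq_of_iso e (by omega), hcount k hk hkW hk2]

variable {A : Type*} [AddCommGroup A] {G : SimpleGraph A} {S T : Set A} {d : A}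

lemma le_circulantGraph_of_forall_not_adj (hG : G ≤ circulantGraph S) (hST : S ⊆ insert d T)
    (hd : ∀ x, ¬ G.Adj x (x + d)) : G ≤ circulantGraph T := by
  intro x y hxy
  have hx : x - y ≠ d := fun h => hd y (by rw [← h, add_sub_cancel]; exact hxy.symm)
  have hy : y - x ≠ d := fun h => hd x (by rw [← h, add_sub_cancel]; exact hxy)
  have hS := hG hxy
  simp only [circulantGraph_adj] at hS ⊢
  exact ⟨hS.1, hS.2.imp (fun h => (hST h).resolve_left hx) fun h => (hST h).resolve_left hy⟩

end Labelling

section ZagrebIndex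

variable {V W : Type*} [Fintype V] [Fintype W] {G : SimpleGraph V} {G' : SimpleGraph W}
  [DecidableRel G.Adj] [DecidableRel G'.Adj]

/-- Twice the second Zagreb index of `G`: the sum of `deg x * deg y` over all ordered pairs of
adjacent vertices `x` and `y`. -/
def zagrebSum (G : SimpleGraph V) [DecidableRel G.Adj] : ℕ :=
  ∑ x, ∑ y, if G.Adj x y then G.degree x * G.degree y else 0

lemma zagrebSum_eq_of_iso (e : G ≃g G') : zagrebSum G = zagrebSum G' :=
  Fintype.sum_equiv e.toEquiv _ _ fun x => Fintype.sum_equiv e.toEquiv _ _ fun y => by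
    simp only [RelIso.coe_fn_toEquiv, e.map_adj_iff, e.degree_eq]

end ZagrebIndex

section OrderFourteen

/-- The edges of the circulant graph on 14 vertices with connection set `ds`: the chords of the
14-cycle `0, 1, …, 13` that join vertices at a distance in `ds`. -/
def chords (ds : Finset (Fin 14)) : List (Fin 14 × Fin 14) :=
  (List.finRange 14 ×ˢ List.finRange 14).filter fun (x, y) => x < y ∧ (x - y ∈ ds ∨ y - x ∈ ds)

/-- The orders of the cycles counted in a bipancyclic graph on 14 vertices. -/
def evenLengths : List ℕ := [4, 6, 8, 10, 12, 14]

/-- The extensions of `L` by chords with length in `ds` that have exactly two cycles of each even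
length. -/
def candidates (ds : Finset (Fin 14)) (L : List (Fin 14 × Fin 14)) :
    List (List (Fin 14 × Fin 14)) :=
  extensions 14 2 evenLengths ((chords ds).length + 1) (chords ds) L (cycleLengths 14 L)

/-- The pairs of chords that complete the 14-cycle with the chord `(0, 3)` to a (2)-bipancyclic
graph. -/
def completions : List (List (Fin 14 × Fin 14)) :=
  [[(8, 13), (0, 9)], [(4, 9), (3, 8)], [(5, 10), (4, 9)], [(6, 11), (5, 10)], [(7, 12), (6, 11)],
    [(8, 13), (7, 12)]]

/-- The edges of the three (2)-bipancyclic graphs of order 14: a Hamiltonian cycle and three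
chords. -/
def targetEdges (i : Fin 3) : List (Fin 14 × Fin 14) :=
  ![[(4, 9), (3, 8)], [(5, 10), (4, 9)], [(6, 11), (5, 10)]] i ++ (0, 3) :: chords {1}

lemma mem_chords {ds : Finset (Fin 14)} {x y : Fin 14} :
    (x, y) ∈ chords ds ↔ x < y ∧ (x - y ∈ ds ∨ y - x ∈ ds) := by
  simp [chords]

lemma fromEdges_chords (ds : Finset (Fin 14)) :
    fromEdges (chords ds) = circulantGraph (ds : Set (Fin 14)) := by
  ext x y
  simp only [fromEdges_adj, mem_chords, circulantGraph_adj, Finset.mem_coe]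
  have := lt_or_gt_of_ne (a := x) (b := y)
  tauto

lemma fromEdges_chords_one : fromEdges (chords {1}) = cycleGraph 14 := by
  rw [fromEdges_chords, Finset.coe_singleton, cycleGraph_eq_circulantGraph]

lemma mem_evenLengths {k : ℕ} : k ∈ evenLengths ↔ 4 ≤ k ∧ k ≤ 14 ∧ Even k := by
  constructor
  · revert k
    decide
  · rintro ⟨h4, h14, hk⟩
    interval_cases k <;> revert hk <;> decide

lemma le_circulantGraph_odd {G : SimpleGraph (Fin 14)} (hcycle : cycleGraph 14 ≤ G)
    (hG : G.Colorable 2) : G ≤ circulantGraph {1, 3, 5, 7} := by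
  have hodd : ∀ x y : Fin 14, (x : ℕ) % 2 ≠ y % 2 → (circulantGraph {1, 3, 5, 7}).Adj x y := by
    simp only [circulantGraph_adj, Set.mem_insert_iff, Set.mem_singleton_iff]
    decide +kernel
  exact fun x y hxy => hodd x y (mod_two_ne_of_adj (pathGraph_le_cycleGraph.trans hcycle) hG hxy)

lemma candidates_five : candidates {5} (chords {1}) = [] := by
  decide +kernel

lemma candidates_five_seven : candidates {5, 7} ((0, 7) :: chords {1}) = [] := by
  decide +kernel

lemma candidates_three_five_seven : candidates {3, 5, 7} ((0, 3) :: chords {1}) =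
    completions.map (· ++ (0, 3) :: chords {1}) := by
  decide +kernel

lemma exists_iso_targetEdges_of_mem_completions {L : List (Fin 14 × Fin 14)}
    (hL : L ∈ completions.map (· ++ (0, 3) :: chords {1})) :
    ∃ i, Nonempty (fromEdges L ≃g fromEdges (targetEdges i)) := by
  -- The reflection `x ↦ 3 - x` fixes the chord `(0, 3)`.
  have hdihedral : ∀ L ∈ completions.map (· ++ (0, 3) :: chords {1}),
      ∃ i, ∃ f ∈ [Equiv.refl _, Equiv.subLeft 3], ∀ x y,
        (fromEdges (targetEdges i)).Adj (f x) (f y) ↔ (fromEdges L).Adj x y := by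
    decide +kernel
  obtain ⟨i, f, -, hf⟩ := hdihedral L hL
  exact ⟨i, ⟨f, hf _ _⟩⟩

section Completeness

variable {G : SimpleGraph (Fin 14)} {ds : Finset (Fin 14)}

lemma exists_mem_candidates (hG : IsRBipancyclic G 2) (hle : G ≤ circulantGraph ↑(insert 1 ds))
    {L : List (Fin 14 × Fin 14)} (hL : IsSimpleList L) (hcycle : chords {1} ⊆ L)
    (hLG : fromEdges L ≤ G) : ∃ L' ∈ candidates ds L, fromEdges L' = G := by
  have hks (k : ℕ) (hk : k ∈ evenLengths) : 3 ≤ k := by have := mem_evenLengths.1 hk; omega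
  refine exists_mem_extensions (Fintype.card_fin 14).le hks (fun k hk => ?_) (Nat.lt_succ_self _)
    hL hLG fun x y hxy => ?_
  · obtain ⟨h4, h14, heven⟩ := mem_evenLengths.1 hk
    exact hG.2.2.2 k h4 (h14.trans_eq (Fintype.card_fin 14).symm) heven
  · have hadj : (fromEdges (chords {1})).Adj x y ∨ (fromEdges (chords ds)).Adj x y := by
      have := hle hxy
      simp only [fromEdges_chords, circulantGraph_adj, Finset.coe_insert, Finset.mem_coe,
        Finset.coe_singleton, Set.mem_insert_iff, Set.mem_singleton_iff] at this ⊢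
      tauto
    simp only [fromEdges_adj, List.mem_append] at hadj ⊢
    have hxy' := @hcycle (x, y)
    have hyx := @hcycle (y, x)
    tauto

lemma exists_mem_candidates_of_adj (hG : IsRBipancyclic G 2) (hcycle : cycleGraph 14 ≤ G)
    (hle : G ≤ circulantGraph ↑(insert 1 ds)) {x d : Fin 14} (hadj : G.Adj x (x + d))
    (hsimple : IsSimpleList ((0, d) :: chords {1})) :
    ∃ L ∈ candidates ds ((0, d) :: chords {1}), Nonempty (G ≃g fromEdges L) := by
  let f := Equiv.addRight x
  have hle' : G.comap f ≤ circulantGraph ↑(insert 1 ds) := fun _ _ h =>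
    circulantGraph_adj_translate.1 (hle h)
  have hcycle' : fromEdges (chords {1}) ≤ G.comap f := by
    rw [fromEdges_chords_one, cycleGraph_eq_circulantGraph]
    rw [cycleGraph_eq_circulantGraph] at hcycle
    exact fun _ _ h => hcycle (circulantGraph_adj_translate.2 h)
  have hchord : (G.comap f).Adj 0 d := by simpa [f, add_comm] using hadj
  obtain ⟨L, hL, hLG⟩ := exists_mem_candidates (isRBipancyclic_of_iso (Iso.comap f G).symm hG)
    hle' hsimple (List.subset_cons_self _ _)
    (fromEdges_cons_le hcycle' hchord)
  exact ⟨L, hL, ⟨hLG ▸ (Iso.comap f G).symm⟩⟩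

theorem exists_iso_targetEdges (hG : IsRBipancyclic G 2) (hcycle : cycleGraph 14 ≤ G) :
    ∃ i, Nonempty (G ≃g fromEdges (targetEdges i)) := by
  have hodd : G ≤ circulantGraph {1, 3, 5, 7} := le_circulantGraph_odd hcycle hG.1
  by_cases h3 : ∃ x, G.Adj x (x + 3)
  · obtain ⟨x, hx⟩ := h3
    obtain ⟨L, hL, ⟨e⟩⟩ := exists_mem_candidates_of_adj (ds := {3, 5, 7}) hG hcycle
      (by simpa using hodd) hx (by decide +kernel)
    rw [candidates_three_five_seven] at hL
    obtain ⟨i, ⟨e'⟩⟩ := exists_iso_targetEdges_of_mem_completions hL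
    exact ⟨i, ⟨e.trans e'⟩⟩
  have hodd₇ : G ≤ circulantGraph {1, 5, 7} :=
    le_circulantGraph_of_forall_not_adj hodd (by grind) (not_exists.1 h3)
  by_cases h7 : ∃ x, G.Adj x (x + 7)
  · obtain ⟨x, hx⟩ := h7
    obtain ⟨L, hL, -⟩ := exists_mem_candidates_of_adj (ds := {5, 7}) hG hcycle
      (by simpa using hodd₇) hx (by decide +kernel)
    simp [candidates_five_seven] at hL
  · have hodd₅ : G ≤ circulantGraph {1, 5} :=
      le_circulantGraph_of_forall_not_adj hodd₇ (by grind) (not_exists.1 h7)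
    obtain ⟨L, hL, -⟩ := exists_mem_candidates (ds := {5}) hG (by simpa using hodd₅)
      (by decide +kernel) (List.Subset.refl _)
      (fromEdges_chords_one.trans_le hcycle)
    simp [candidates_five] at hL

end Completeness

lemma isSimpleList_targetEdges : ∀ i, IsSimpleList (targetEdges i) := by
  decide +kernel

lemma isRBipancyclic_targetEdges (i : Fin 3) : IsRBipancyclic (fromEdges (targetEdges i)) 2 := by
  refine ⟨⟨Coloring.mk (fun x => Fin.ofNat 2 x) fun {x y} hxy => ?_⟩, ?_, ?_, fun k h4 h14 hk => ?_⟩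
  · revert i x y
    decide +kernel
  · decide
  · decide
  · have hcount : ∀ i, ∀ k ∈ evenLengths, (cycleLengths 14 (targetEdges i)).count k = 2 := by
      decide +kernel
    rw [cycleCount_fromEdges (isSimpleList_targetEdges i) (Fintype.card_fin 14).le (by omega)]
    exact hcount i k (mem_evenLengths.2 ⟨h4, by simpa using h14, hk⟩)

lemma isEmpty_iso_targetEdges {i j : Fin 3} (hij : i ≠ j) :
    IsEmpty (fromEdges (targetEdges i) ≃g fromEdges (targetEdges j)) := by
  have hzagreb : ∀ i j, i ≠ j →
      zagrebSum (fromEdges (targetEdges i)) ≠ zagrebSum (fromEdges (targetEdges j)) := by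
    decide +kernel
  exact ⟨fun e => hzagreb i j hij (zagrebSum_eq_of_iso e)⟩

end OrderFourteen

theorem two_bipancyclic_count_order_14_general :
    ∃ Gs : Fin 3 → SimpleGraph (Fin 14),
      (∀ i j, i ≠ j → IsEmpty (Gs i ≃g Gs j)) ∧
      (∀ i, IsRBipancyclic (Gs i) 2 ∧ (Gs i).edgeSet.ncard = 17) ∧
      ∀ (W : Type*) [Fintype W] (G : SimpleGraph W), Fintype.card W = 14 →
        IsRBipancyclic G 2 → ∃ i, Nonempty (G ≃g Gs i) := by
  refine ⟨fun i => fromEdges (targetEdges i), fun i j => isEmpty_iso_targetEdges,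
    fun i => ⟨isRBipancyclic_targetEdges i, ?_⟩, fun W _ G hW hG => ?_⟩
  · rw [ncard_edgeSet_fromEdges (isSimpleList_targetEdges i)]
    revert i
    decide +kernel
  · have hcount : cycleCount G 14 = 2 := hG.2.2.2 14 (by decide) hW.ge (by decide)
    obtain ⟨G', ⟨e⟩, hcycle⟩ := exists_iso_cycleGraph_le hW (hcount.trans_ne two_ne_zero)
    obtain ⟨i, ⟨e'⟩⟩ := exists_iso_targetEdges (isRBipancyclic_of_iso e hG) hcycle
    exact ⟨i, ⟨e.trans e'⟩⟩

theorem two_bipancyclic_count_order_14 : ExactlyNUpToIso 2 3 14 19 := by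
  obtain ⟨Gs, hne, hGs, hcomplete⟩ := two_bipancyclic_count_order_14_general
  exact ⟨Gs, hne, fun i => ⟨(hGs i).1, (hGs i).2.trans_le (by decide)⟩,
    fun _ _ G hW _ hG => hcomplete _ G hW hG⟩
end

section
/- There are, up to isomorphism, exactly ten (2)-bipancyclic graphs on 22 vertices with at most 27 edges. -/
open SimpleGraph

/-!
A bipancyclic graph on `22` vertices has a Hamilton cycle, so it is this cycle together with at most
five chords of odd span. The circuits of such a graph are the minimal nonempty elements of its cycle
space. A new chord doubles the cycle space: each old element `D` gives the new one `D ∆ F`, where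
`F` is the cycle that the chord closes with the Hamilton cycle, and `D ∆ F` is a circuit if and only
if it contains no old circuit. Old circuits persist, so an exhaustive search over the chords may
stop as soon as some length occurs three times. It leaves only copies of ten graphs with four chords
each, up to rotation and reflection, and their numbers of walks of length six are distinct.
-/

namespace Bipancyclic

open Finset
open scoped symmDiff

section Cycles

variable {V W : Type*} {n : ℕ}

lemma cycleGraph_adj_iff_eq_add_one {i j : Fin (n + 3)} :
    (cycleGraph (n + 3)).Adj i j ↔ j = i + 1 ∨ i = j + 1 := by
  rw [cycleGraph_adj, or_comm, sub_eq_iff_eq_add', sub_eq_iff_eq_add']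

lemma mem_verts_iff_exists_adj_of_iso_cycleGraph {G : SimpleGraph V} {H : G.Subgraph}
    (e : H.coe ≃g cycleGraph (n + 3)) {v : V} : v ∈ H.verts ↔ ∃ w, H.Adj v w := by
  refine ⟨fun hv ↦ ⟨e.symm (e ⟨v, hv⟩ + 1), ?_⟩, fun ⟨w, h⟩ ↦ h.fst_mem⟩
  have : H.coe.Adj (e.symm (e ⟨v, hv⟩)) (e.symm (e ⟨v, hv⟩ + 1)) :=
    e.symm.map_adj_iff.2 (cycleGraph_adj_iff_eq_add_one.2 (.inl rfl))
  rwa [RelIso.symm_apply_apply] at this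

section EdgeSets

variable [DecidableEq V]

/-- The edges `f 0 f 1, f 1 f 2, …, f (n+2) f 0` of the closed walk through the values of `f`;
for injective `f` they form a cycle of length `n + 3`. -/
def cycleEdges (f : Fin (n + 3) → V) : Finset (Sym2 V) := univ.image fun i ↦ s(f i, f (i + 1))

/-- The edge sets of the cycles of length `n + 3` in `G`. -/
def cycleEdgeSets (G : SimpleGraph V) (n : ℕ) : Set (Finset (Sym2 V)) :=
  {D | (∃ f : Fin (n + 3) → V, f.Injective ∧ cycleEdges f = D) ∧ (D : Set (Sym2 V)) ⊆ G.edgeSet}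

lemma mem_cycleEdges {f : Fin (n + 3) → V} {e : Sym2 V} :
    e ∈ cycleEdges f ↔ ∃ i, s(f i, f (i + 1)) = e := by
  simp [cycleEdges]

lemma exists_copy_coe_eq {G : SimpleGraph V} {f : Fin (n + 3) → V} (hf : f.Injective)
    (hG : (cycleEdges f : Set (Sym2 V)) ⊆ G.edgeSet) :
    ∃ φ : Copy (cycleGraph (n + 3)) G, ⇑φ = f := by
  have hadj (i) : G.Adj (f i) (f (i + 1)) := hG (mem_cycleEdges.2 ⟨i, rfl⟩)
  refine ⟨⟨⟨f, fun {i j} h ↦ ?_⟩, hf⟩, rfl⟩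
  rcases cycleGraph_adj_iff_eq_add_one.1 h with rfl | rfl
  exacts [hadj i, (hadj j).symm]

lemma edgeSet_toSubgraph_eq_cycleEdges {G : SimpleGraph V} (φ : Copy (cycleGraph (n + 3)) G) :
    φ.toSubgraph.edgeSet = cycleEdges φ := by
  ext e
  induction e with | _ a b =>
  simp only [Subgraph.mem_edgeSet, Copy.toSubgraph, Subgraph.map_adj, Relation.Map,
    Subgraph.top_adj, cycleGraph_adj_iff_eq_add_one, mem_coe, mem_cycleEdges]
  constructor
  · rintro ⟨i, j, rfl | rfl, rfl, rfl⟩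
    exacts [⟨i, rfl⟩, ⟨j, Sym2.eq_swap⟩]
  · rintro ⟨i, h⟩
    rcases Sym2.eq_iff.1 h with ⟨ha, hb⟩ | ⟨hb, ha⟩
    exacts [⟨i, i + 1, .inl rfl, ha, hb⟩, ⟨i + 1, i, .inr rfl, ha, hb⟩]

lemma edgeSet_eq_cycleEdges {G : SimpleGraph V} {H : G.Subgraph}
    (e : H.coe ≃g cycleGraph (n + 3)) :
    H.edgeSet = cycleEdges fun i ↦ (e.symm i : V) := by
  ext x
  induction x with | _ a b =>
  simp only [Subgraph.mem_edgeSet, mem_coe, mem_cycleEdges]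
  constructor
  · intro h
    have hadj : H.coe.Adj ⟨a, h.fst_mem⟩ ⟨b, h.snd_mem⟩ := h
    rcases cycleGraph_adj_iff_eq_add_one.1 (e.map_adj_iff.2 hadj) with hab | hba
    · exact ⟨e ⟨a, h.fst_mem⟩, by simp [← hab]⟩
    · exact ⟨e ⟨b, h.snd_mem⟩, by simp [← hba, Sym2.eq_swap]⟩
  · rintro ⟨i, h⟩
    rw [← Subgraph.mem_edgeSet, ← h, Subgraph.mem_edgeSet]
    exact e.symm.map_adj_iff.2 (cycleGraph_adj_iff_eq_add_one.2 (.inl rfl))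

theorem cycleCount_add_three_eq_ncard_cycleEdgeSets (G : SimpleGraph V) (n : ℕ) :
    cycleCount G (n + 3) = (cycleEdgeSets G n).ncard := by
  set cycles := {H : G.Subgraph | Nonempty (H.coe ≃g cycleGraph (n + 3))}
  have image_edgeSet : Subgraph.edgeSet '' cycles = (↑) '' cycleEdgeSets G n := by
    ext D
    constructor
    · rintro ⟨H, ⟨e⟩, rfl⟩
      refine ⟨_, ⟨⟨fun i ↦ e.symm i, ?_, rfl⟩, ?_⟩, (edgeSet_eq_cycleEdges e).symm⟩
      · exact Subtype.val_injective.comp e.symm.injective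
      · exact edgeSet_eq_cycleEdges e ▸ H.edgeSet_subset
    · rintro ⟨_, ⟨⟨f, hf, rfl⟩, hG⟩, rfl⟩
      obtain ⟨φ, rfl⟩ := exists_copy_coe_eq hf hG
      exact ⟨φ.toSubgraph, ⟨φ.isoToSubgraph.symm⟩, edgeSet_toSubgraph_eq_cycleEdges φ⟩
  have edgeSet_injOn : cycles.InjOn Subgraph.edgeSet := by
    rintro H ⟨e⟩ H' ⟨e'⟩ h
    have hadj (a b : V) : H.Adj a b ↔ H'.Adj a b := by
      rw [← Subgraph.mem_edgeSet, h, Subgraph.mem_edgeSet]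
    refine Subgraph.ext (Set.ext fun v ↦ ?_) (funext₂ fun a b ↦ propext (hadj a b))
    simp only [mem_verts_iff_exists_adj_of_iso_cycleGraph e, hadj,
      mem_verts_iff_exists_adj_of_iso_cycleGraph e']
  rw [cycleCount, ← edgeSet_injOn.ncard_image, image_edgeSet,
    Set.ncard_image_of_injective _ coe_injective]

end EdgeSets

lemma cycleCount_le_of_iso [Finite W] {G : SimpleGraph V} {H : SimpleGraph W} (e : G ≃g H) (n : ℕ) :
    cycleCount G (n + 3) ≤ cycleCount H (n + 3) := by
  classical
  simp only [cycleCount_add_three_eq_ncard_cycleEdgeSets]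
  refine Set.ncard_le_ncard_of_injOn (fun D ↦ D.image (Sym2.map e)) ?_
    (image_injective (Sym2.map.injective e.injective)).injOn
  rintro _ ⟨⟨f, hf, rfl⟩, hG⟩
  refine ⟨⟨e ∘ f, e.injective.comp hf, by simp [cycleEdges, image_image, Function.comp_def]⟩, ?_⟩
  rw [coe_image, Set.image_subset_iff]
  intro x hx
  induction x with | _ a b =>
  exact e.map_adj_iff.2 (hG hx)

lemma cycleCount_congr [Finite V] [Finite W] {G : SimpleGraph V} {H : SimpleGraph W} (e : G ≃g H)
    (n : ℕ) : cycleCount G (n + 3) = cycleCount H (n + 3) :=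
  (cycleCount_le_of_iso e n).antisymm (cycleCount_le_of_iso e.symm n)

lemma isRBipancyclic_congr [Fintype V] [Fintype W] {G : SimpleGraph V} {H : SimpleGraph W}
    (e : G ≃g H) {r : ℕ} (hG : IsRBipancyclic G r) : IsRBipancyclic H r := by
  obtain ⟨hcol, heven, hcard, hcount⟩ := hG
  rw [Fintype.card_congr e.toEquiv] at heven hcard hcount
  refine ⟨hcol.of_hom e.symm.toHom, heven, hcard, fun k hk hkv hkeven ↦ ?_⟩
  obtain ⟨n, rfl⟩ := Nat.exists_eq_add_of_le' (show 3 ≤ k by lia)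
  rw [← cycleCount_congr e, hcount _ hk hkv hkeven]

end Cycles

section EvenSets

lemma exists_existsUnique_adj_of_isAcyclic {V : Type*} [Finite V] {G : SimpleGraph V}
    (hG : G.IsAcyclic) {a b : V} (hab : G.Adj a b) : ∃ v, ∃! w, G.Adj v w := by
  classical
  have := Fintype.ofFinite V
  set c := G.connectedComponentMk a
  have mem_c {x y : V} (hx : x ∈ c.supp) (hxy : G.Adj x y) : y ∈ c.supp :=
    c.mem_supp_of_adj_mem_supp hx hxy
  have ha : a ∈ c.supp := rfl
  have : Nontrivial c := ⟨⟨a, ha⟩, ⟨b, mem_c ha hab⟩, fun h ↦ hab.ne congr(($h).val)⟩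
  obtain ⟨v, hv⟩ := (hG.isTree_connectedComponent c).exists_vert_degree_one_of_nontrivial
  obtain ⟨w, hw, unique⟩ := degree_eq_one_iff_existsUnique_adj.1 hv
  exact ⟨v, w, hw, fun y hy ↦ congr(($(unique ⟨y, mem_c v.2 hy⟩ hy)).val)⟩

lemma fin_add_two_ne_self {n : ℕ} (i : Fin (n + 3)) : i + 1 + 1 ≠ i := by
  rw [add_assoc, Ne, add_eq_left, Fin.ext_iff, Fin.val_add]
  simp [Nat.mod_eq_of_lt (show 2 < n + 3 by lia)]

lemma cycleEdge_injective {V : Type*} {n : ℕ} {f : Fin (n + 3) → V} (hf : f.Injective) :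
    Function.Injective fun i ↦ s(f i, f (i + 1)) := by
  intro i j h
  rcases Sym2.eq_iff.1 h with ⟨hij, _⟩ | ⟨hi, hj⟩
  · exact hf hij
  · rw [hf.eq_iff] at hi hj
    exact absurd (hi ▸ hj) (fin_add_two_ne_self j)

variable {V : Type*} [DecidableEq V] {D F : Finset (Sym2 V)} {n : ℕ}

/-- An edge set is even if every vertex lies on an even number of its edges; the even subsets
of the edge set of a graph are the elements of its cycle space over `𝔽₂`. -/
def IsEven (D : Finset (Sym2 V)) : Prop := ∀ v, Even #{e ∈ D | v ∈ e}

/-- A circuit is a minimal nonempty even edge set; in a loopless graph these are exactly the edge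
sets of cycles. -/
def IsCircuit (D : Finset (Sym2 V)) : Prop := Minimal (fun D ↦ D.Nonempty ∧ IsEven D) D

lemma even_card_symmDiff_iff {α : Type*} [DecidableEq α] (s t : Finset α) :
    Even #(s ∆ t) ↔ (Even #s ↔ Even #t) := by
  have hs := card_sdiff_add_card_inter s t
  have ht := card_sdiff_add_card_inter t s
  rw [inter_comm] at ht
  rw [symmDiff_def, sup_eq_union, card_union_of_disjoint disjoint_sdiff_sdiff]
  grind

lemma even_card_filter_pair_iff {α : Type*} [DecidableEq α] {a b : α} (hab : a ≠ b) (p : α → Prop)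
    [DecidablePred p] : Even #(({a, b} : Finset α).filter p) ↔ (p a ↔ p b) := by
  by_cases ha : p a <;> by_cases hb : p b <;> simp [filter_insert, filter_singleton, ha, hb, hab]

lemma isEven_empty : IsEven (∅ : Finset (Sym2 V)) := by simp [IsEven]

lemma IsEven.isEven_symmDiff_iff (hF : IsEven F) : IsEven (D ∆ F) ↔ IsEven D := by
  refine forall_congr' fun v ↦ ?_
  have filter_symmDiff : {e ∈ D ∆ F | v ∈ e} = {e ∈ D | v ∈ e} ∆ {e ∈ F | v ∈ e} := by
    ext e; simp only [mem_filter, mem_symmDiff]; tauto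
  simp [filter_symmDiff, even_card_symmDiff_iff, hF v]

lemma card_cycleEdges {f : Fin (n + 3) → V} (hf : f.Injective) : #(cycleEdges f) = n + 3 := by
  rw [cycleEdges, card_image_of_injective _ (cycleEdge_injective hf), card_univ, Fintype.card_fin]

lemma filter_mem_cycleEdges {f : Fin (n + 3) → V} (hf : f.Injective) (i : Fin (n + 3)) :
    {e ∈ cycleEdges f | f (i + 1) ∈ e} = {s(f i, f (i + 1)), s(f (i + 1), f (i + 1 + 1))} := by
  ext e
  simp only [mem_filter, mem_cycleEdges, mem_insert, mem_singleton]
  constructor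
  · rintro ⟨⟨j, rfl⟩, h⟩
    rcases Sym2.mem_iff.1 h with h | h
    · exact .inr (by rw [hf h])
    · exact .inl (by rw [add_right_cancel (hf h)])
  · rintro (rfl | rfl)
    exacts [⟨⟨i, rfl⟩, by simp⟩, ⟨⟨i + 1, rfl⟩, by simp⟩]

lemma isEven_iff_of_subset_cycleEdges {f : Fin (n + 3) → V} (hf : f.Injective)
    (hD : D ⊆ cycleEdges f) :
    IsEven D ↔ ∀ i, s(f i, f (i + 1)) ∈ D ↔ s(f (i + 1), f (i + 1 + 1)) ∈ D := by
  have even_iff (i) : Even #{e ∈ D | f (i + 1) ∈ e} ↔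
      (s(f i, f (i + 1)) ∈ D ↔ s(f (i + 1), f (i + 1 + 1)) ∈ D) := by
    rw [← even_card_filter_pair_iff ((cycleEdge_injective hf).ne (by simp : i ≠ i + 1)),
      ← filter_mem_cycleEdges hf, filter_comm, filter_mem_eq_inter, inter_eq_right.2 hD]
  refine ⟨fun h i ↦ (even_iff i).1 (h _), fun h v ↦ ?_⟩
  by_cases hv : v ∈ Set.range f
  · obtain ⟨j, rfl⟩ := hv
    rw [← sub_add_cancel j 1, even_iff]
    exact h _
  · rw [filter_false_of_mem, card_empty]
    · exact Even.zero
    · intro e he hve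
      obtain ⟨i, rfl⟩ := mem_cycleEdges.1 (hD he)
      rcases Sym2.mem_iff.1 hve with rfl | rfl <;> exact hv ⟨_, rfl⟩

lemma isEven_cycleEdges {f : Fin (n + 3) → V} (hf : f.Injective) : IsEven (cycleEdges f) :=
  (isEven_iff_of_subset_cycleEdges hf Subset.rfl).2 fun _ ↦
    iff_of_true (mem_cycleEdges.2 ⟨_, rfl⟩) (mem_cycleEdges.2 ⟨_, rfl⟩)

lemma IsEven.eq_cycleEdges {f : Fin (n + 3) → V} (hf : f.Injective) (hD : D ⊆ cycleEdges f)
    (hne : D.Nonempty) (heven : IsEven D) : D = cycleEdges f := by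
  have propagate := (isEven_iff_of_subset_cycleEdges hf hD).1 heven
  obtain ⟨e, he⟩ := hne
  obtain ⟨i, rfl⟩ := mem_cycleEdges.1 (hD he)
  have around (k : Fin (n + 3)) : s(f (i + k), f (i + k + 1)) ∈ D := by
    induction k using Fin.induction with
    | zero => simpa using he
    | succ k ih => rw [← Fin.coeSucc_eq_succ, ← add_assoc]; exact (propagate _).1 ih
  refine hD.antisymm fun e he ↦ ?_
  obtain ⟨j, rfl⟩ := mem_cycleEdges.1 he
  simpa using around (j - i)

lemma isCircuit_cycleEdges {f : Fin (n + 3) → V} (hf : f.Injective) : IsCircuit (cycleEdges f) :=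
  ⟨⟨⟨_, mem_cycleEdges.2 ⟨0, rfl⟩⟩, isEven_cycleEdges hf⟩,
    fun _ hD hsub ↦ (hD.2.eq_cycleEdges hf hsub hD.1).ge⟩

lemma IsEven.exists_cycleEdges_subset [Finite V] (hD : ∀ e ∈ D, ¬e.IsDiag) (hne : D.Nonempty)
    (heven : IsEven D) : ∃ n, ∃ f : Fin (n + 3) → V, f.Injective ∧ cycleEdges f ⊆ D := by
  set G : SimpleGraph V := fromEdgeSet D
  have adj_iff {a b : V} : G.Adj a b ↔ s(a, b) ∈ D := by
    simpa [G] using fun h ↦ Sym2.mk_isDiag_iff.not.1 (hD _ h)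
  have not_isAcyclic : ¬G.IsAcyclic := by
    intro hG
    obtain ⟨e, he⟩ := hne
    induction e with | _ a b =>
    obtain ⟨v, w, hvw, unique⟩ := exists_existsUnique_adj_of_isAcyclic hG (adj_iff.2 he)
    have edges_at_v : {e ∈ D | v ∈ e} = {s(v, w)} := by
      ext e
      rw [mem_filter, mem_singleton]
      constructor
      · rintro ⟨heD, y, rfl⟩
        rw [unique y (adj_iff.2 heD)]
      · rintro rfl
        exact ⟨adj_iff.1 hvw, Sym2.mem_mk_left v w⟩
    simpa [edges_at_v] using heven v
  rw [isAcyclic_iff_free_cycleGraph] at not_isAcyclic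
  push Not at not_isAcyclic
  obtain ⟨k, hk, ⟨φ⟩⟩ := not_isAcyclic
  obtain ⟨n, rfl⟩ := Nat.exists_eq_add_of_le' hk
  refine ⟨n, φ, φ.injective, fun e he ↦ ?_⟩
  obtain ⟨i, rfl⟩ := mem_cycleEdges.1 he
  exact adj_iff.1 (φ.toHom.map_adj (cycleGraph_adj_iff_eq_add_one.2 (.inl rfl)))

theorem isCircuit_iff_exists_cycleEdges_eq [Finite V] (hD : ∀ e ∈ D, ¬e.IsDiag) :
    IsCircuit D ↔ ∃ n, ∃ f : Fin (n + 3) → V, f.Injective ∧ cycleEdges f = D := by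
  refine ⟨fun h ↦ ?_, fun ⟨n, f, hf, hfD⟩ ↦ hfD ▸ isCircuit_cycleEdges hf⟩
  obtain ⟨n, f, hf, hsub⟩ := h.prop.2.exists_cycleEdges_subset hD h.prop.1
  exact ⟨n, f, hf, h.eq_of_le (isCircuit_cycleEdges hf).prop hsub⟩

lemma IsCircuit.even_card [Finite V] {G : SimpleGraph V} (hG : G.Colorable 2)
    (hsub : (D : Set (Sym2 V)) ⊆ G.edgeSet) (h : IsCircuit D) : Even #D := by
  obtain ⟨n, f, hf, rfl⟩ := (isCircuit_iff_exists_cycleEdges_eq fun e he ↦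
    G.not_isDiag_of_mem_edgeSet (hsub he)).1 h
  obtain ⟨φ, -⟩ := exists_copy_coe_eq hf hsub
  rw [card_cycleEdges hf, ← Nat.not_odd_iff_even]
  intro hodd
  have := (hG.of_hom φ.toHom).chromaticNumber_le
  rw [chromaticNumber_cycleGraph_of_odd (n + 3) (by lia) hodd] at this
  norm_num at this

lemma IsCircuit.three_le_card [Finite V] (h : IsCircuit D) (hD : ∀ e ∈ D, ¬e.IsDiag) :
    3 ≤ #D := by
  obtain ⟨n, f, hf, rfl⟩ := (isCircuit_iff_exists_cycleEdges_eq hD).1 h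
  rw [card_cycleEdges hf]
  lia

lemma IsCircuit.card_le_card [Fintype V] (h : IsCircuit D) (hD : ∀ e ∈ D, ¬e.IsDiag) :
    #D ≤ Fintype.card V := by
  obtain ⟨n, f, hf, rfl⟩ := (isCircuit_iff_exists_cycleEdges_eq hD).1 h
  simpa [card_cycleEdges hf] using Fintype.card_le_of_injective f hf

open scoped Classical in
/-- The even subsets of an edge set `E`. -/
noncomputable def evenSets (E : Finset (Sym2 V)) : Finset (Finset (Sym2 V)) :=
  {D ∈ E.powerset | IsEven D}

open scoped Classical in
/-- The circuits contained in an edge set `E`. -/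
noncomputable def circuits (E : Finset (Sym2 V)) : Finset (Finset (Sym2 V)) :=
  {D ∈ E.powerset | IsCircuit D}

variable {E : Finset (Sym2 V)}

lemma mem_evenSets : D ∈ evenSets E ↔ D ⊆ E ∧ IsEven D := by simp [evenSets]

lemma mem_circuits : D ∈ circuits E ↔ D ⊆ E ∧ IsCircuit D := by simp [circuits]

lemma circuits_mono {E' : Finset (Sym2 V)} (h : E ⊆ E') : circuits E ⊆ circuits E' := fun _ hC ↦
  mem_circuits.2 ⟨(mem_circuits.1 hC).1.trans h, (mem_circuits.1 hC).2⟩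

theorem cycleCount_add_three_eq_card_circuits [Finite V] {G : SimpleGraph V}
    (hE : (E : Set (Sym2 V)) = G.edgeSet) (n : ℕ) :
    cycleCount G (n + 3) = #{D ∈ circuits E | #D = n + 3} := by
  rw [cycleCount_add_three_eq_ncard_cycleEdgeSets, ← Set.ncard_coe_finset]
  congr 1
  ext D
  rw [cycleEdgeSets, ← hE, mem_coe, mem_filter, mem_circuits]
  constructor
  · rintro ⟨⟨f, hf, rfl⟩, hsub⟩
    exact ⟨⟨coe_subset.1 hsub, isCircuit_cycleEdges hf⟩, card_cycleEdges hf⟩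
  · rintro ⟨⟨hsub, hD⟩, hcard⟩
    have loopless (e) (he : e ∈ D) : ¬e.IsDiag :=
      G.not_isDiag_of_mem_edgeSet (hE ▸ mem_coe.2 (hsub he))
    obtain ⟨m, f, hf, rfl⟩ := (isCircuit_iff_exists_cycleEdges_eq loopless).1 hD
    obtain rfl : m = n := by simpa [card_cycleEdges hf] using hcard
    exact ⟨⟨f, hf, rfl⟩, coe_subset.2 hsub⟩

end EvenSets

section AddEdge

variable {V : Type*} [DecidableEq V] {D E F : Finset (Sym2 V)} {e : Sym2 V}

open scoped Classical in
/-- The circuits among the symmetric differences `D ∆ F` with `D ∈ 𝒟`. If `𝒟` consists of the even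
subsets of `E` and `F` is a cycle through a new edge `e` with `F ⊆ insert e E`, these are the
circuits created by adding `e` to `E`. -/
noncomputable def newCircuits (𝒟 : Finset (Finset (Sym2 V))) (F : Finset (Sym2 V)) :
    Finset (Finset (Sym2 V)) :=
  {D ∈ 𝒟.image (· ∆ F) | IsCircuit D}

lemma mem_newCircuits {𝒟 : Finset (Finset (Sym2 V))} :
    D ∈ newCircuits 𝒟 F ↔ D ∈ 𝒟.image (· ∆ F) ∧ IsCircuit D := by
  classical exact mem_filter

lemma IsEven.exists_isCircuit_subset (hD : IsEven D) (hne : D.Nonempty) :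
    ∃ C ⊆ D, IsCircuit C :=
  exists_minimal_le_of_wellFoundedLT (fun B : Finset (Sym2 V) ↦ B.Nonempty ∧ IsEven B) D ⟨hne, hD⟩

lemma notMem_of_mem_evenSets (he : e ∉ E) (hD : D ∈ evenSets E) : e ∉ D :=
  fun heD ↦ he ((mem_evenSets.1 hD).1 heD)

lemma evenSets_insert (hF : IsEven F) (heF : e ∈ F) (hFE : F ⊆ insert e E) :
    evenSets (insert e E) = evenSets E ∪ (evenSets E).image (· ∆ F) := by
  ext D
  simp only [mem_union, mem_image, mem_evenSets]
  constructor
  · rintro ⟨hDE, hD⟩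
    by_cases heD : e ∈ D
    · refine .inr ⟨D ∆ F, ⟨fun x hx ↦ ?_, hF.isEven_symmDiff_iff.2 hD⟩,
        symmDiff_symmDiff_cancel_right F D⟩
      have := @hDE x; have := @hFE x
      grind [mem_symmDiff]
    · exact .inl ⟨(subset_insert_iff_of_notMem heD).1 hDE, hD⟩
  · rintro (⟨hDE, hD⟩ | ⟨D, ⟨hDE, hD⟩, rfl⟩)
    · exact ⟨hDE.trans (subset_insert e E), hD⟩
    · exact ⟨symmDiff_subset_union.trans (union_subset (hDE.trans (subset_insert e E)) hFE),
        hF.isEven_symmDiff_iff.2 hD⟩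

lemma disjoint_evenSets_image_symmDiff (he : e ∉ E) (heF : e ∈ F) :
    Disjoint (evenSets E) ((evenSets E).image (· ∆ F)) := by
  rw [Finset.disjoint_left]
  intro D hD hDF
  obtain ⟨D', hD', rfl⟩ := mem_image.1 hDF
  exact notMem_of_mem_evenSets he hD
    (mem_symmDiff.2 (.inr ⟨heF, notMem_of_mem_evenSets he hD'⟩))

open scoped Classical in
lemma circuits_eq_filter_evenSets (E : Finset (Sym2 V)) :
    circuits E = {D ∈ evenSets E | IsCircuit D} := by
  ext D
  rw [mem_filter, mem_evenSets, mem_circuits]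
  exact ⟨fun h ↦ ⟨⟨h.1, h.2.prop.2⟩, h.2⟩, fun h ↦ ⟨h.1.1, h.2⟩⟩

lemma circuits_insert (hF : IsEven F) (heF : e ∈ F) (hFE : F ⊆ insert e E) :
    circuits (insert e E) = circuits E ∪ newCircuits (evenSets E) F := by
  classical
  rw [circuits_eq_filter_evenSets, evenSets_insert hF heF hFE, filter_union,
    ← circuits_eq_filter_evenSets, newCircuits]

lemma disjoint_circuits_newCircuits (he : e ∉ E) (heF : e ∈ F) :
    Disjoint (circuits E) (newCircuits (evenSets E) F) :=
  (disjoint_evenSets_image_symmDiff he heF).mono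
    (fun _ hC ↦ mem_evenSets.2 ⟨(mem_circuits.1 hC).1, (mem_circuits.1 hC).2.prop.2⟩)
    fun _ hC ↦ (mem_newCircuits.1 hC).1

/-- An even set `B ∌ e` inside `D ∆ F` would contain a circuit of `E`, and so would the complement
in `D ∆ F` of a proper even subset `B ∋ e`. -/
lemma isCircuit_symmDiff_iff (he : e ∉ E) (hF : IsEven F) (heF : e ∈ F) (hFE : F ⊆ insert e E)
    (hD : D ∈ evenSets E) : IsCircuit (D ∆ F) ↔ ∀ C ∈ circuits E, ¬C ⊆ D ∆ F := by
  have heDF : e ∈ D ∆ F := mem_symmDiff.2 (.inr ⟨heF, notMem_of_mem_evenSets he hD⟩)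
  have hDF : D ∆ F ∈ evenSets (insert e E) := by
    rw [evenSets_insert hF heF hFE]
    exact mem_union_right _ (mem_image_of_mem _ hD)
  rw [mem_evenSets] at hDF
  constructor
  · intro h C hC hsub
    rw [mem_circuits] at hC
    exact he (hC.1 (h.eq_of_le hC.2.prop hsub ▸ heDF))
  · intro h
    have eq_empty {B} (hB : IsEven B) (hsub : B ⊆ D ∆ F) (heB : e ∉ B) : B = ∅ := by
      by_contra hne
      obtain ⟨C, hCB, hC⟩ := hB.exists_isCircuit_subset (nonempty_iff_ne_empty.2 hne)
      have hBE := (subset_insert_iff_of_notMem heB).1 (hsub.trans hDF.1)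
      exact h C (mem_circuits.2 ⟨hCB.trans hBE, hC⟩) (hCB.trans hsub)
    refine ⟨⟨⟨e, heDF⟩, hDF.2⟩, fun B ⟨hne, hB⟩ hsub ↦ ?_⟩
    have heB : e ∈ B := by
      by_contra heB
      exact hne.ne_empty (eq_empty hB hsub heB)
    have hdiff : (D ∆ F) ∆ B = (D ∆ F) \ B := symmDiff_of_ge hsub
    exact sdiff_eq_empty_iff_subset.1
      (eq_empty (hdiff ▸ hB.isEven_symmDiff_iff.2 hDF.2) sdiff_subset (by simp [heB]))

end AddEdge

section Masks

variable {α : Type*} {ι : α → ℕ} {E C D D' F : Finset α}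

/-- The base-`32` number with digit `1` at the positions `ι e`, `e ∈ D`. Base `32` instead of `2`
makes `#D` readable from the mask: it is the residue modulo `31`. -/
def mask (ι : α → ℕ) (D : Finset α) : ℕ := ∑ e ∈ D, 32 ^ ι e

lemma mask_mod (ι : α → ℕ) (hD : #D < 31) : mask ι D % 31 = #D := by
  have : mask ι D ≡ ∑ _ ∈ D, 1 [MOD 31] :=
    Nat.ModEq.sum fun e _ ↦ by simpa using (show 32 ≡ 1 [MOD 31] from rfl).pow (ι e)
  rw [this, sum_const, smul_eq_mul, mul_one, Nat.mod_eq_of_lt hD]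

lemma testBit_mask (hι : Set.InjOn ι E) (hD : D ⊆ E) (j : ℕ) :
    (mask ι D).testBit j ↔ ∃ e ∈ D, 5 * ι e = j := by
  have hmask : mask ι D = ∑ i ∈ D.image (5 * ι ·), 2 ^ i := by
    rw [sum_image fun a ha b hb h ↦ hι (hD ha) (hD hb) (by simpa using h)]
    exact sum_congr rfl fun e _ ↦ by rw [pow_mul]; rfl
  rw [hmask, ← Nat.mem_bitIndices, ← List.mem_toFinset, toFinset_bitIndices_sum_two_pow, mem_image]

lemma mask_symmDiff [DecidableEq α] (hι : Set.InjOn ι E) (hD : D ⊆ E) (hF : F ⊆ E) :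
    mask ι (D ∆ F) = mask ι D ^^^ mask ι F := by
  refine Nat.eq_of_testBit_eq fun j ↦ Bool.eq_iff_iff.2 ?_
  rw [testBit_mask hι (symmDiff_subset_union.trans (union_subset hD hF)), Nat.testBit_xor,
    Bool.xor_iff_ne, Ne, Bool.eq_iff_iff, testBit_mask hι hD, testBit_mask hι hF]
  have eq_of_index_eq {a b} (ha : a ∈ E) (hb : b ∈ E) (h : 5 * ι a = 5 * ι b) : a = b :=
    hι ha hb (by simpa using h)
  grind [mem_symmDiff]

lemma mask_and_eq_left_iff (hι : Set.InjOn ι E) (hC : C ⊆ E) (hD : D ⊆ E) :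
    mask ι C &&& mask ι D = mask ι C ↔ C ⊆ D := by
  have testBit_iff : mask ι C &&& mask ι D = mask ι C ↔
      ∀ j, (mask ι C).testBit j → (mask ι D).testBit j := by
    rw [Nat.eq_iff_testBit_eq]
    simp only [Nat.testBit_and, Bool.and_eq_left_iff_imp]
  simp only [testBit_iff, testBit_mask hι hC, testBit_mask hι hD]
  constructor
  · intro h e he
    obtain ⟨d, hd, hde⟩ := h _ ⟨e, he, rfl⟩
    exact hι (hD hd) (hC he) (by simpa using hde) ▸ hd
  · rintro h j ⟨e, he, rfl⟩
    exact ⟨e, h he, rfl⟩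

/-- The list `l` consists of the masks of the members of `𝒟`, each exactly once. -/
def Encodes (ι : α → ℕ) (l : List ℕ) (𝒟 : Finset (Finset α)) : Prop :=
  (l : Multiset ℕ) = 𝒟.val.map (mask ι)

lemma Encodes.append [DecidableEq α] {l l' : List ℕ} {𝒟 𝒟' : Finset (Finset α)} (h : Encodes ι l 𝒟)
    (h' : Encodes ι l' 𝒟') (hdisj : Disjoint 𝒟 𝒟') : Encodes ι (l ++ l') (𝒟 ∪ 𝒟') := by
  rw [Encodes, ← disjUnion_eq_union _ _ hdisj, disjUnion_val, Multiset.map_add, ← h, ← h',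
    Multiset.coe_add]

lemma Encodes.map_xor [DecidableEq α] {l : List ℕ} {𝒟 : Finset (Finset α)} (h : Encodes ι l 𝒟)
    (hι : Set.InjOn ι E) (h𝒟 : ∀ D ∈ 𝒟, D ⊆ E) (hF : F ⊆ E) :
    Encodes ι (l.map (· ^^^ mask ι F)) (𝒟.image (· ∆ F)) := by
  rw [Encodes, image_val_of_injOn (symmDiff_left_injective F).injOn, ← Multiset.map_coe, h,
    Multiset.map_map, Multiset.map_map]
  exact Multiset.map_congr rfl fun D hD ↦ (mask_symmDiff hι (h𝒟 D hD) hF).symm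

lemma Encodes.filter {l : List ℕ} {𝒟 : Finset (Finset α)} (h : Encodes ι l 𝒟) {p : ℕ → Bool}
    {q : Finset α → Prop} [DecidablePred q] (hpq : ∀ D ∈ 𝒟, p (mask ι D) ↔ q D) :
    Encodes ι (l.filter p) {D ∈ 𝒟 | q D} := by
  have filter_coe : (l.filter p : Multiset ℕ) = (l : Multiset ℕ).filter (p · = true) := by simp
  rw [Encodes, filter_coe, h, filter_val, Multiset.filter_map]
  congr 1
  exact Multiset.filter_congr hpq

lemma Encodes.mem_iff {l : List ℕ} {𝒟 : Finset (Finset α)} (h : Encodes ι l 𝒟) {m : ℕ} :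
    m ∈ l ↔ ∃ D ∈ 𝒟, mask ι D = m := by
  rw [← Multiset.mem_coe, h, Multiset.mem_map]
  rfl

/-- The sizes of the members of `𝒟`. -/
def sizes (𝒟 : Finset (Finset α)) : Multiset ℕ := 𝒟.val.map card

lemma sizes_union [DecidableEq α] {𝒟 𝒟' : Finset (Finset α)} (h : Disjoint 𝒟 𝒟') :
    sizes (𝒟 ∪ 𝒟') = sizes 𝒟 + sizes 𝒟' := by
  rw [← disjUnion_eq_union _ _ h, sizes, disjUnion_val, Multiset.map_add, sizes, sizes]

lemma sizes_mono {𝒟 𝒟' : Finset (Finset α)} (h : 𝒟 ⊆ 𝒟') : sizes 𝒟 ≤ sizes 𝒟' :=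
  Multiset.map_le_map (val_le_iff.2 h)

lemma Encodes.map_mod {l : List ℕ} {𝒟 : Finset (Finset α)} (h : Encodes ι l 𝒟)
    (h𝒟 : ∀ D ∈ 𝒟, #D < 31) : (l.map (· % 31) : Multiset ℕ) = sizes 𝒟 := by
  rw [← Multiset.map_coe, h, Multiset.map_map]
  exact Multiset.map_congr rfl fun D hD ↦ mask_mod ι (h𝒟 D hD)

end Masks

section Tallies

/-- The generating number `∑ 8 ^ l` of a multiset of lengths `l`; as long as no length occurs more
than seven times, the multiplicities are its octal digits. -/
def tally (L : Multiset ℕ) : ℕ := (L.map (8 ^ ·)).sum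

lemma tally_add (L L' : Multiset ℕ) : tally (L + L') = tally L + tally L' := by
  simp [tally]

lemma tally_cons (l : ℕ) (L : Multiset ℕ) : tally (l ::ₘ L) = 8 ^ l + tally L := by
  simp [tally]

lemma tally_eq_sum_range {L : Multiset ℕ} {n : ℕ} (hL : ∀ l ∈ L, l < n) :
    tally L = ∑ l ∈ range n, L.count l * 8 ^ l := by
  rw [tally, sum_multiset_map_count]
  refine sum_subset (fun l hl ↦ mem_range.2 (hL l (Multiset.mem_toFinset.1 hl))) fun l _ hl ↦ ?_
  simp [Multiset.count_eq_zero_of_notMem (mt Multiset.mem_toFinset.2 hl)]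

lemma and_sum_four_mul_eq_zero (n : ℕ) {d : ℕ → ℕ} (hd : ∀ l, d l < 4) :
    (∑ l ∈ range n, d l * 8 ^ l) &&& (∑ l ∈ range n, 4 * 8 ^ l) = 0 := by
  induction n generalizing d with
  | zero => simp
  | succ n ih =>
    have shift (d : ℕ → ℕ) : ∑ l ∈ range (n + 1), d l * 8 ^ l =
        d 0 + 2 ^ 3 * ∑ l ∈ range n, d (l + 1) * 8 ^ l := by
      rw [sum_range_succ', mul_sum, add_comm]
      simp only [pow_succ, pow_zero, mul_one]
      congr 1
      exact sum_congr rfl fun l _ ↦ by ring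
    rw [shift, shift fun _ ↦ 4, ← Nat.div_add_mod (_ &&& _) (2 ^ 3), Nat.and_div_two_pow,
      Nat.and_mod_two_pow]
    have := hd 0
    simp only [Nat.add_mul_div_left _ _ (show 0 < 2 ^ 3 by lia), Nat.add_mul_mod_self_left]
    rw [Nat.div_eq_of_lt (by lia), Nat.div_eq_of_lt (by lia), zero_add, zero_add,
      ih fun l ↦ hd (l + 1)]
    interval_cases d 0 <;> rfl

/-- The number `∑ l < 23, 8 ^ l`. Adding it to a tally makes an octal digit exceed three, setting a
bit of `4 * lengthOffset`, as soon as a length occurs three times. -/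
def lengthOffset : ℕ := 84327972908386521673

/-- The offset tally of two occurrences of each even length from `4` to `22`. -/
def fullTally : ℕ := 234244369189962560073

/-- Some octal digit of `N` exceeds three. -/
def IsCrowded (N : ℕ) : Prop := N &&& 4 * lengthOffset ≠ 0

lemma not_isCrowded {L : Multiset ℕ} (hL : ∀ l ∈ L, l < 23) (hcount : ∀ l, L.count l ≤ 2) :
    ¬IsCrowded (lengthOffset + tally L) := by
  have hoffset : lengthOffset = ∑ l ∈ range 23, 8 ^ l := by decide
  rw [IsCrowded, not_not, tally_eq_sum_range hL, hoffset, ← sum_add_distrib, mul_sum]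
  simpa only [add_mul, one_mul, add_comm] using
    and_sum_four_mul_eq_zero 23 (d := fun l ↦ L.count l + 1) fun l ↦ by grind

lemma lengthOffset_add_tally_eq_fullTally {L : Multiset ℕ}
    (hL : ∀ l, L.count l = if 4 ≤ l ∧ l ≤ 22 ∧ Even l then 2 else 0) :
    lengthOffset + tally L = fullTally := by
  rw [tally_eq_sum_range (n := 23) fun l hl ↦ ?_]
  · simp only [hL]
    decide
  · have := Multiset.count_pos.2 hl
    grind

end Tallies

section KernelEvaluation

variable {α β : Type*}

/-! The kernel evaluates the search below. It substitutes arguments unevaluated, so numbers are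
forced by `withValue`, lists are passed on by continuations, and recursors are used directly
because they reduce much faster than compiled definitions. -/

/-- `k n`, with `n` evaluated before it is substituted. -/
noncomputable def withValue (n : ℕ) (k : ℕ → α) : α :=
  Nat.rec (k 0) (fun m _ ↦ k (Nat.succ m)) n

noncomputable def pick (b : Bool) (x y : α) : α := Bool.rec y x b

noncomputable def fold (f : β → α → α) (z : α) (l : List β) : α := List.rec z (fun b _ a ↦ f b a) l

/-- No number in `cs` is bitwise contained in `m`. -/
noncomputable def avoids (cs : List ℕ) (m : ℕ) : Bool :=
  List.rec true (fun c _ b ↦ Bool.rec b false (Nat.beq (Nat.land c m) c)) cs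

/-- `k (l.map g)`, with the entries evaluated. -/
noncomputable def withMap (g : β → ℕ) : List β → (k : List ℕ → α) → α :=
  fold (fun b r k ↦ withValue (g b) fun n ↦ r fun l ↦ k (n :: l)) fun k ↦ k []

@[simp]
lemma withValue_eq (n : ℕ) (k : ℕ → α) : withValue n k = k n := by cases n <;> rfl

@[simp]
lemma pick_eq_ite (b : Bool) (x y : α) : pick b x y = if b then x else y := by cases b <;> rfl

@[simp]
lemma fold_cons (f : β → α → α) (z : α) (b : β) (l : List β) :
    fold f z (b :: l) = f b (fold f z l) := rfl

lemma fold_cons_eq_append (l l' : List α) : fold List.cons l' l = l ++ l' := by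
  induction l with
  | nil => rfl
  | cons a l ih => rw [fold_cons, ih, List.cons_append]

lemma avoids_iff {cs : List ℕ} {m : ℕ} : avoids cs m ↔ ∀ c ∈ cs, c &&& m ≠ c := by
  induction cs with
  | nil => simp [avoids]
  | cons c cs ih =>
    have : avoids (c :: cs) m = pick (Nat.beq (Nat.land c m) c) false (avoids cs m) := rfl
    simp [this, ih]

lemma withMap_eq (g : β → ℕ) (l : List β) (k : List ℕ → α) : withMap g l k = k (l.map g) := by
  induction l generalizing k with
  | nil => rfl
  | cons b l ih => exact (withValue_eq (g b) fun n ↦ withMap g l fun l ↦ k (n :: l)).trans (ih _)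

/-- The masks of the circuits `D ∆ F`, for `D` in a family with masks `ds` and `F` with mask `f`, if
`cs` are the masks of the circuits that avoid a chosen edge of `F`; see `isCircuit_symmDiff_iff`. -/
noncomputable def newMasks (cs : List ℕ) (f : ℕ) (ds : List ℕ) : List ℕ :=
  (ds.map (· ^^^ f)).filter (avoids cs)

/-- `k (newMasks cs f ds ++ cs)`, with the entries evaluated. -/
noncomputable def withNewMasks (cs : List ℕ) (f : ℕ) : List ℕ → (k : List ℕ → α) → α :=
  fold (fun d r k ↦ withValue (Nat.xor d f) fun m ↦
    pick (avoids cs m) (r fun l ↦ k (m :: l)) (r k)) fun k ↦ k cs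

lemma newMasks_cons (cs : List ℕ) (f d : ℕ) (ds : List ℕ) :
    newMasks cs f (d :: ds) =
      if avoids cs (d ^^^ f) then (d ^^^ f) :: newMasks cs f ds else newMasks cs f ds := by
  simp [newMasks, List.filter_cons]

lemma withNewMasks_cons (cs : List ℕ) (f d : ℕ) (ds : List ℕ) (k : List ℕ → α) :
    withNewMasks cs f (d :: ds) k = if avoids cs (d ^^^ f) then
      withNewMasks cs f ds fun l ↦ k ((d ^^^ f) :: l) else withNewMasks cs f ds k :=
  (withValue_eq (d ^^^ f) fun m ↦ pick (avoids cs m) (withNewMasks cs f ds fun l ↦ k (m :: l))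
    (withNewMasks cs f ds k)).trans (pick_eq_ite _ _ _)

lemma withNewMasks_eq (cs : List ℕ) (f : ℕ) (ds : List ℕ) (k : List ℕ → α) :
    withNewMasks cs f ds k = k (newMasks cs f ds ++ cs) := by
  induction ds generalizing k with
  | nil => rfl
  | cons d ds ih =>
    rw [withNewMasks_cons, newMasks_cons, ih, ih]
    split_ifs <;> rfl

end KernelEvaluation

section Search

variable {α : Type*}

/-- A chord that may still be added: its index `chord`, the mask `mask` of the cycle it closes with
the Hamilton cycle, and the tally `total` of the circuits known to be created by adding it. -/
structure Candidate where
  chord : ℕ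
  mask : ℕ
  total : ℕ

noncomputable def roomy (N : ℕ) : Bool := Nat.beq (Nat.land N (4 * lengthOffset)) 0

/-- Adds to `total` the lengths of the circuits with masks `newMasks cs f ds`, stopping with `fail`
when `N + total` becomes crowded. -/
noncomputable def addNewLengths (N : ℕ) (cs : List ℕ) (f : ℕ) (fail : α) (k : ℕ → α) :
    List ℕ → (total : ℕ) → α :=
  fold (fun d r total ↦ withValue (Nat.xor d f) fun m ↦
    pick (avoids cs m)
      (withValue (Nat.add total (Nat.pow 8 (Nat.mod m 31))) fun total ↦
        pick (roomy (Nat.add N total)) (r total) fail)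
      (r total)) k

/-- Updates the totals of the candidates and drops the crowded ones. -/
noncomputable def sieve (N : ℕ) (cs ds : List ℕ) :
    List Candidate → (k : List Candidate → α) → α :=
  fold (fun c r k ↦
    pick (roomy (Nat.add N c.total))
      (addNewLengths N cs c.mask (r k)
        (fun total ↦ r fun l ↦ k (⟨c.chord, c.mask, total⟩ :: l)) ds c.total)
      (r k)) fun k ↦ k []

/-- `k c l` holds for each candidate `c` of a list and the list `l` of those behind it. -/
noncomputable def forallSplit (k : Candidate → List Candidate → Bool) (l : List Candidate) : Bool :=
  List.rec true (fun c l b ↦ pick (k c l) b false) l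

/-- Depth-first search: `P` holds for each reachable list of chords whose offset tally is full.
`chords` are the chords added so far, `old ++ new` the masks of the even sets, where `new` are
those containing the last chord, `cs` the masks of the circuits and `N` their offset tally. Chords
are added in decreasing order; `top` restricts the first one. -/
noncomputable def search (P : List ℕ → Bool) (fuel : ℕ) (top : ℕ → Bool)
    (chords old new cs : List ℕ) (N : ℕ) (candidates : List Candidate) : Bool :=
  Nat.rec (motive := fun _ ↦ (ℕ → Bool) → List ℕ → List ℕ → List ℕ → List ℕ → ℕ →
      List Candidate → Bool)
    (fun _ _ _ _ _ _ _ ↦ true)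
    (fun _ r top chords old new cs N candidates ↦
      pick (pick (Nat.beq N fullTally) (P chords) true)
        (sieve N cs new candidates fun candidates ↦ forallSplit (fun c rest ↦
          pick (top c.chord)
            (withNewMasks cs c.mask (fold List.cons new old) fun cs' ↦
              withMap (fun d ↦ Nat.xor d c.mask) (fold List.cons new old) fun new' ↦
                withValue (Nat.add N c.total) fun N' ↦
                  r (fun _ ↦ true) (c.chord :: chords) (fold List.cons new old) new' cs' N' rest)
            true) candidates)
        false) fuel top chords old new cs N candidates

lemma roomy_iff {N : ℕ} : roomy N ↔ ¬IsCrowded N := by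
  simp [roomy, IsCrowded]

lemma addNewLengths_cons (N : ℕ) (cs : List ℕ) (f : ℕ) (fail : α) (k : ℕ → α) (d : ℕ) (ds : List ℕ)
    (total : ℕ) : addNewLengths N cs f fail k (d :: ds) total =
      if avoids cs (d ^^^ f) then
        if roomy (N + (total + 8 ^ ((d ^^^ f) % 31))) then
          addNewLengths N cs f fail k ds (total + 8 ^ ((d ^^^ f) % 31))
        else fail
      else addNewLengths N cs f fail k ds total := by
  simp only [addNewLengths, fold_cons, withValue_eq, pick_eq_ite]
  rfl

lemma sieve_cons (N : ℕ) (cs ds : List ℕ) (c : Candidate) (l : List Candidate)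
    (k : List Candidate → α) : sieve N cs ds (c :: l) k =
      if roomy (N + c.total) then
        addNewLengths N cs c.mask (sieve N cs ds l k) (fun total ↦ sieve N cs ds l fun l ↦
          k (⟨c.chord, c.mask, total⟩ :: l)) ds c.total
      else sieve N cs ds l k :=
  pick_eq_ite _ _ _

lemma addNewLengths_eq_fail_or (N : ℕ) (cs : List ℕ) (f : ℕ) (fail : α) (k : ℕ → α) (ds : List ℕ)
    (total : ℕ) : addNewLengths N cs f fail k ds total = fail ∨
      ∃ total', addNewLengths N cs f fail k ds total = k total' := by
  induction ds generalizing total with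
  | nil => exact .inr ⟨total, rfl⟩
  | cons d ds ih =>
    rw [addNewLengths_cons]
    split_ifs
    exacts [ih _, .inl rfl, ih _]

/-- The tally of the lengths of the even sets with masks `l`. -/
def maskTally (l : List ℕ) : ℕ := tally (l.map (· % 31) : List ℕ)

lemma maskTally_nil : maskTally [] = 0 := rfl

lemma maskTally_cons (m : ℕ) (l : List ℕ) : maskTally (m :: l) = 8 ^ (m % 31) + maskTally l := by
  rw [maskTally, List.map_cons, ← Multiset.cons_coe, tally_cons, maskTally]

lemma addNewLengths_eq {N : ℕ} {cs : List ℕ} {f : ℕ} {ds : List ℕ} {total : ℕ}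
    (h : ∀ l, List.Sublist l (newMasks cs f ds) → ¬IsCrowded (N + (total + maskTally l)))
    (fail : α) (k : ℕ → α) :
    addNewLengths N cs f fail k ds total = k (total + maskTally (newMasks cs f ds)) := by
  induction ds generalizing total with
  | nil => rfl
  | cons d ds ih =>
    rw [newMasks_cons] at h ⊢
    rw [addNewLengths_cons]
    split_ifs at h ⊢ with havoids hroomy
    · rw [ih, maskTally_cons, add_assoc]
      intro l hl
      simpa only [maskTally_cons, add_assoc] using h _ (hl.cons_cons (d ^^^ f))
    · refine absurd (roomy_iff.2 ?_) hroomy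
      simpa only [maskTally_cons, maskTally_nil, add_zero] using
        h _ (List.singleton_sublist.2 List.mem_cons_self)
    · exact ih h

/-- The candidate `c` after the circuits with masks `newMasks cs c.mask ds` have been counted. -/
noncomputable def Candidate.update (cs ds : List ℕ) (c : Candidate) : Candidate :=
  ⟨c.chord, c.mask, c.total + maskTally (newMasks cs c.mask ds)⟩

lemma exists_of_sieve {N : ℕ} {cs ds : List ℕ} {l kept : List Candidate} (hl : kept.Sublist l)
    (hroom : ∀ c ∈ kept, ∀ l, List.Sublist l (newMasks cs c.mask ds) →
      ¬IsCrowded (N + (c.total + maskTally l)))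
    {k : List Candidate → Bool} (h : sieve N cs ds l k = true) :
    ∃ l', (kept.map (Candidate.update cs ds)).Sublist l' ∧ k l' = true := by
  induction hl generalizing k with
  | slnil => exact ⟨[], List.Sublist.slnil, h⟩
  | cons c _ ih =>
    rw [sieve_cons] at h
    split_ifs at h
    · rcases addNewLengths_eq_fail_or N cs c.mask _ _ ds c.total with heq | ⟨total, heq⟩ <;>
        rw [heq] at h
      · exact ih hroom h
      · obtain ⟨l', hl', hk⟩ := ih hroom h
        exact ⟨_, hl'.cons _, hk⟩
    · exact ih hroom h
  | cons_cons c _ ih =>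
    obtain ⟨hc, hkept⟩ := List.forall_mem_cons.1 hroom
    have hroomy : roomy (N + c.total) := by
      simpa only [roomy_iff, maskTally_nil, add_zero] using hc [] (List.nil_sublist _)
    rw [sieve_cons, if_pos hroomy, addNewLengths_eq hc] at h
    obtain ⟨l', hl', hk⟩ := ih hkept h
    exact ⟨_, hl'.cons_cons _, hk⟩

lemma forallSplit_iff {k : Candidate → List Candidate → Bool} {l : List Candidate} :
    forallSplit k l ↔ ∀ c l', c :: l' <:+ l → k c l' := by
  induction l with
  | nil => simp [forallSplit]
  | cons c l ih =>
    have : forallSplit k (c :: l) = pick (k c l) (forallSplit k l) false := rfl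
    simp [this, ih, List.suffix_cons_iff, or_imp, forall_and]

lemma search_succ {P : List ℕ → Bool} {fuel : ℕ} {top : ℕ → Bool} {chords old new cs : List ℕ}
    {N : ℕ} {candidates : List Candidate}
    (h : search P (fuel + 1) top chords old new cs N candidates = true) :
    (N = fullTally → P chords = true) ∧ sieve N cs new candidates (forallSplit fun c rest ↦
      if top c.chord then
        search P fuel (fun _ ↦ true) (c.chord :: chords) (old ++ new)
          ((old ++ new).map (· ^^^ c.mask)) (newMasks cs c.mask (old ++ new) ++ cs) (N + c.total)
          rest
      else true) = true := by
  change pick (pick (Nat.beq N fullTally) (P chords) true)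
    (sieve N cs new candidates fun candidates ↦ forallSplit (fun c rest ↦
      pick (top c.chord)
        (withNewMasks cs c.mask (fold List.cons new old) fun cs' ↦
          withMap (fun d ↦ Nat.xor d c.mask) (fold List.cons new old) fun new' ↦
            withValue (Nat.add N c.total) fun N' ↦
              search P fuel (fun _ ↦ true) (c.chord :: chords) (fold List.cons new old) new' cs' N'
                rest)
        true) candidates)
    false = true at h
  simp only [pick_eq_ite, withNewMasks_eq, withMap_eq, withValue_eq, fold_cons_eq_append,
    Nat.beq_eq] at h
  split_ifs at h with hN hP
  · exact ⟨fun _ ↦ hP, h⟩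
  · exact ⟨fun h ↦ absurd h hN, h⟩

end Search

section NewCircuits

variable {V : Type*} [DecidableEq V] {E F : Finset (Sym2 V)} {e : Sym2 V} {ι : Sym2 V → ℕ}
  {𝒟 𝒟' : Finset (Finset (Sym2 V))}

lemma newCircuits_union : newCircuits (𝒟 ∪ 𝒟') F = newCircuits 𝒟 F ∪ newCircuits 𝒟' F := by
  classical rw [newCircuits, image_union, filter_union, newCircuits, newCircuits]

lemma disjoint_newCircuits (h : Disjoint 𝒟 𝒟') :
    Disjoint (newCircuits 𝒟 F) (newCircuits 𝒟' F) := by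
  classical
  exact ((disjoint_image (symmDiff_left_injective F)).2 h).mono
    (fun _ hC ↦ (mem_newCircuits.1 hC).1) fun _ hC ↦ (mem_newCircuits.1 hC).1

lemma Encodes.newMasks {l cs : List ℕ} (hl : Encodes ι l 𝒟) (hcs : Encodes ι cs (circuits E))
    (h𝒟 : 𝒟 ⊆ evenSets E) (he : e ∉ E) (hF : IsEven F) (heF : e ∈ F) (hFE : F ⊆ insert e E)
    (hι : Set.InjOn ι ↑(insert e E)) :
    Encodes ι (newMasks cs (mask ι F) l) (newCircuits 𝒟 F) := by
  classical
  have sub_of_mem {D} (hD : D ∈ 𝒟) : D ⊆ insert e E :=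
    (mem_evenSets.1 (h𝒟 hD)).1.trans (subset_insert e E)
  refine (hl.map_xor hι (fun D ↦ sub_of_mem) hFE).filter fun D hD ↦ ?_
  obtain ⟨D, hD𝒟, rfl⟩ := mem_image.1 hD
  have hDF : D ∆ F ⊆ insert e E := symmDiff_subset_union.trans (union_subset (sub_of_mem hD𝒟) hFE)
  rw [avoids_iff, isCircuit_symmDiff_iff he hF heF hFE (h𝒟 hD𝒟)]
  have mask_iff {C} (hC : C ∈ circuits E) :
      mask ι C &&& mask ι (D ∆ F) = mask ι C ↔ C ⊆ D ∆ F :=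
    mask_and_eq_left_iff hι ((mem_circuits.1 hC).1.trans (subset_insert e E)) hDF
  constructor
  · exact fun h C hC hsub ↦ h _ (hcs.mem_iff.2 ⟨C, hC, rfl⟩) ((mask_iff hC).2 hsub)
  · rintro h c hc hmask
    obtain ⟨C, hC, rfl⟩ := hcs.mem_iff.1 hc
    exact h C hC ((mask_iff hC).1 hmask)

end NewCircuits

section Counting

variable {V : Type*} [Fintype V] [DecidableEq V] {G : SimpleGraph V} {E C : Finset (Sym2 V)}

lemma three_le_card_and_card_le_of_mem_circuits (hE : (E : Set (Sym2 V)) = G.edgeSet)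
    (hC : C ∈ circuits E) : 3 ≤ #C ∧ #C ≤ Fintype.card V := by
  rw [mem_circuits] at hC
  have loopless (e) (he : e ∈ C) : ¬e.IsDiag :=
    G.not_isDiag_of_mem_edgeSet (hE ▸ mem_coe.2 (hC.1 he))
  exact ⟨hC.2.three_le_card loopless, hC.2.card_le_card loopless⟩

theorem isRBipancyclic_iff_count_sizes_circuits (hE : (E : Set (Sym2 V)) = G.edgeSet) {r : ℕ} :
    IsRBipancyclic G r ↔ G.Colorable 2 ∧ Even (Fintype.card V) ∧ 4 ≤ Fintype.card V ∧
      ∀ l, (sizes (circuits E)).count l =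
        if 4 ≤ l ∧ l ≤ Fintype.card V ∧ Even l then r else 0 := by
  have count_eq (l) : (sizes (circuits E)).count l = #{C ∈ circuits E | #C = l} := by
    rw [sizes, Multiset.count_map, card_def, filter_val]
    simp only [eq_comm]
  refine and_congr_right fun hG ↦ and_congr_right fun _ ↦ and_congr_right fun _ ↦
    ⟨fun h l ↦ ?_, fun h l h4 hl heven ↦ ?_⟩
  · split_ifs with hl
    · obtain ⟨n, rfl⟩ := Nat.exists_eq_add_of_le' (show 3 ≤ l by lia)
      rw [count_eq, ← cycleCount_add_three_eq_card_circuits hE, h _ hl.1 hl.2.1 hl.2.2]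
    · rw [count_eq, card_eq_zero, filter_eq_empty_iff]
      rintro C hC rfl
      obtain ⟨h3, hle⟩ := three_le_card_and_card_le_of_mem_circuits hE hC
      have heven := (mem_circuits.1 hC).2.even_card hG (hE ▸ coe_subset.2 (mem_circuits.1 hC).1)
      grind
  · obtain ⟨n, rfl⟩ := Nat.exists_eq_add_of_le' (show 3 ≤ l by lia)
    rw [cycleCount_add_three_eq_card_circuits hE, ← count_eq, h, if_pos ⟨h4, hl, heven⟩]

end Counting

section HamiltonCycle

/-- `edge i` joins the vertices `i` and `i + 2 * (i / 22) + 1` modulo `22`. The indices `i < 22`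
give the edges of a Hamilton cycle, the indices from `22` to `120` its chords of odd span. -/
def edge (i : ℕ) : Sym2 (Fin 22) := s(Fin.ofNat 22 i, Fin.ofNat 22 (i + 2 * (i / 22) + 1))

/-- The inverse of `edge`. Of the two numbers compared, the larger one belongs to the longer of the
two arcs of the Hamilton cycle between the ends. -/
def edgeIndex : Sym2 (Fin 22) → ℕ :=
  Sym2.lift ⟨fun x y ↦ min (11 * ((y - x).val - 1) + x) (11 * ((x - y).val - 1) + y),
    fun _ _ ↦ min_comm _ _⟩

lemma edgeIndex_edge : ∀ i < 121, edgeIndex (edge i) = i := by decide +kernel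

lemma edge_edgeIndex : ∀ x y : Fin 22, x.val % 2 ≠ y.val % 2 →
    edgeIndex s(x, y) < 121 ∧ edge (edgeIndex s(x, y)) = s(x, y) := by
  decide +kernel

/-- The edges of the Hamilton cycle together with the chords in `S`. -/
def edges (S : Finset ℕ) : Finset (Sym2 (Fin 22)) := (range 22 ∪ S).image edge

/-- The cycle that the chord `c` closes with the shorter arc of the Hamilton cycle between its ends,
of length `2 * (c / 22) + 2`. -/
def fundamentalCycle (c : ℕ) : Finset (Sym2 (Fin 22)) :=
  cycleEdges fun i : Fin (2 * (c / 22) - 1 + 3) ↦ Fin.ofNat 22 (c + i)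

variable {S : Finset ℕ} {c : ℕ}

lemma mem_edges {e : Sym2 (Fin 22)} : e ∈ edges S ↔ ∃ i, (i < 22 ∨ i ∈ S) ∧ edge i = e := by
  simp [edges]

lemma edges_insert : edges (insert c S) = insert (edge c) (edges S) := by
  rw [edges, union_insert, image_insert, edges]

lemma edges_mono {S' : Finset ℕ} (h : S ⊆ S') : edges S ⊆ edges S' :=
  image_subset_image (union_subset_union_right h)

lemma injOn_edgeIndex (hS : S ⊆ Ico 22 121) : Set.InjOn edgeIndex (edges S) := by
  intro e he e' he' h
  obtain ⟨i, hi, rfl⟩ := mem_edges.1 he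
  obtain ⟨j, hj, rfl⟩ := mem_edges.1 he'
  have lt {i} (hi : i < 22 ∨ i ∈ S) : i < 121 := by
    have := @hS i
    grind
  rw [edgeIndex_edge i (lt hi), edgeIndex_edge j (lt hj)] at h
  rw [h]

lemma edge_notMem_edges (hS : S ⊆ Ico 22 121) (hc : c ∈ Ico 22 121) (hcS : c ∉ S) :
    edge c ∉ edges S := by
  rw [mem_edges]
  rintro ⟨i, hi, h⟩
  have := congrArg edgeIndex h
  have := @hS i
  rw [edgeIndex_edge, edgeIndex_edge] at * <;> grind

lemma fundamentalCycle_injective (hc : c ∈ Ico 22 121) :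
    Function.Injective fun i : Fin (2 * (c / 22) - 1 + 3) ↦ Fin.ofNat 22 (c + i) := by
  intro i j h
  rw [mem_Ico] at hc
  simp only [Fin.ext_iff, Fin.val_ofNat] at h ⊢
  omega

lemma isEven_fundamentalCycle (hc : c ∈ Ico 22 121) : IsEven (fundamentalCycle c) :=
  isEven_cycleEdges (fundamentalCycle_injective hc)

lemma closing_edge_eq_edge (hc : c ∈ Ico 22 121) :
    s(Fin.ofNat 22 (c + Fin.last (2 * (c / 22) - 1 + 2)),
      Fin.ofNat 22 (c + (Fin.last (2 * (c / 22) - 1 + 2) + 1 : Fin _))) = edge c := by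
  have span : c + (2 * (c / 22) - 1 + 2) = c + 2 * (c / 22) + 1 := by grind
  rw [Fin.last_add_one, Sym2.eq_swap, Fin.val_zero, Fin.val_last, add_zero, span, edge]

lemma edge_mem_fundamentalCycle (hc : c ∈ Ico 22 121) : edge c ∈ fundamentalCycle c :=
  mem_cycleEdges.2 ⟨Fin.last _, closing_edge_eq_edge hc⟩

lemma fundamentalCycle_subset (hc : c ∈ Ico 22 121) :
    fundamentalCycle c ⊆ insert (edge c) (edges S) := by
  intro e he
  obtain ⟨i, rfl⟩ := mem_cycleEdges.1 he
  rcases Fin.eq_castSucc_or_eq_last i with ⟨i, rfl⟩ | rfl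
  · refine mem_insert_of_mem (mem_edges.2 ⟨(c + i) % 22, .inl (Nat.mod_lt _ (by simp)), ?_⟩)
    simp only [edge, Nat.mod_div_self, Fin.coeSucc_eq_succ, Fin.val_succ, Fin.val_castSucc]
    simp [Fin.ext_iff, add_assoc]
  · exact mem_insert.2 (.inl (closing_edge_eq_edge hc))

lemma edges_empty : edges ∅ = cycleEdges (id : Fin 22 → Fin 22) := by decide +kernel

lemma circuits_edges_empty : circuits (edges ∅) = {edges ∅} := by
  ext D
  rw [mem_circuits, mem_singleton, edges_empty]
  constructor
  · rintro ⟨hsub, hD⟩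
    exact hD.prop.2.eq_cycleEdges (n := 19) Function.injective_id hsub hD.prop.1
  · rintro rfl
    exact ⟨Subset.rfl, isCircuit_cycleEdges (n := 19) Function.injective_id⟩

lemma evenSets_edges_empty : evenSets (edges ∅) = {∅, edges ∅} := by
  ext D
  rw [mem_evenSets, mem_insert, mem_singleton]
  constructor
  · rintro ⟨hsub, hD⟩
    refine D.eq_empty_or_nonempty.imp_right fun hne ↦ ?_
    rw [edges_empty] at hsub ⊢
    exact hD.eq_cycleEdges (n := 19) Function.injective_id hsub hne
  · rintro (rfl | rfl)
    · exact ⟨empty_subset _, isEven_empty⟩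
    · exact ⟨Subset.rfl, edges_empty ▸ isEven_cycleEdges (n := 19) Function.injective_id⟩

/-- The Hamilton cycle with the chords in `S`. -/
def graph (S : Finset ℕ) : SimpleGraph (Fin 22) := fromEdgeSet (edges S)

lemma edgeSet_graph (S : Finset ℕ) : (edges S : Set (Sym2 (Fin 22))) = (graph S).edgeSet := by
  rw [graph, edgeSet_fromEdgeSet, eq_comm, sdiff_eq_left, Set.disjoint_left]
  intro e he
  obtain ⟨i, -, rfl⟩ := mem_edges.1 he
  simp only [edge, Sym2.diagSet, Sym2.mk_isDiag_iff, Fin.ext_iff, Fin.val_ofNat, Set.mem_ofPred_eq]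
  omega

lemma colorable_graph (S : Finset ℕ) : (graph S).Colorable 2 := by
  refine ⟨Coloring.mk (fun v ↦ Fin.ofNat 2 v) fun {v w} h ↦ ?_⟩
  obtain ⟨i, -, hi⟩ := mem_edges.1 ((fromEdgeSet_adj _).1 h).1
  simp only [edge, Sym2.eq_iff, Fin.ext_iff, Fin.val_ofNat, Ne] at hi ⊢
  omega

end HamiltonCycle

section Soundness

/-- The number lists of the search encode the even sets `𝒪 ∪ 𝒩` and the circuits of the Hamilton
cycle with the chords in `T`. -/
structure IsState (T : Finset ℕ) (𝒪 𝒩 : Finset (Finset (Sym2 (Fin 22)))) (old new cs : List ℕ)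
    (N : ℕ) : Prop where
  disjoint : Disjoint 𝒪 𝒩
  union_eq : 𝒪 ∪ 𝒩 = evenSets (edges T)
  old : Encodes edgeIndex old 𝒪
  new : Encodes edgeIndex new 𝒩
  circuits : Encodes edgeIndex cs (circuits (edges T))
  total : N = lengthOffset + tally (sizes (Bipancyclic.circuits (edges T)))

/-- The candidate for the chord `c` after the circuits created from `𝒟` have been counted. -/
noncomputable def candidate (𝒟 : Finset (Finset (Sym2 (Fin 22)))) (c : ℕ) : Candidate :=
  ⟨c, mask edgeIndex (fundamentalCycle c), tally (sizes (newCircuits 𝒟 (fundamentalCycle c)))⟩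

variable {T U : Finset ℕ} {𝒟 𝒪 𝒩 : Finset (Finset (Sym2 (Fin 22)))} {old new cs : List ℕ} {N c : ℕ}

lemma circuits_edges_insert (hc : c ∈ Ico 22 121) : circuits (edges (insert c T)) =
    circuits (edges T) ∪ newCircuits (evenSets (edges T)) (fundamentalCycle c) := by
  rw [edges_insert, circuits_insert (isEven_fundamentalCycle hc) (edge_mem_fundamentalCycle hc)
    (fundamentalCycle_subset hc)]

lemma disjoint_circuits_newCircuits_edges (hT : T ⊆ Ico 22 121) (hc : c ∈ Ico 22 121)
    (hcT : c ∉ T) : Disjoint (circuits (edges T))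
      (newCircuits (evenSets (edges T)) (fundamentalCycle c)) :=
  disjoint_circuits_newCircuits (edge_notMem_edges hT hc hcT) (edge_mem_fundamentalCycle hc)

lemma card_lt_of_mem_circuits_edges {C : Finset (Sym2 (Fin 22))} (hC : C ∈ circuits (edges T)) :
    #C < 31 :=
  (three_le_card_and_card_le_of_mem_circuits (edgeSet_graph T) hC).2.trans_lt (by simp)

lemma IsState.encodes_newMasks (h : IsState T 𝒪 𝒩 old new cs N) (hT : T ⊆ Ico 22 121)
    (hc : c ∈ Ico 22 121) (hcT : c ∉ T) {l : List ℕ} (hl : Encodes edgeIndex l 𝒟)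
    (h𝒟 : 𝒟 ⊆ evenSets (edges T)) :
    Encodes edgeIndex (newMasks cs (mask edgeIndex (fundamentalCycle c)) l)
      (newCircuits 𝒟 (fundamentalCycle c)) :=
  hl.newMasks h.circuits h𝒟 (edge_notMem_edges hT hc hcT) (isEven_fundamentalCycle hc)
    (edge_mem_fundamentalCycle hc) (fundamentalCycle_subset hc)
    (edges_insert ▸ injOn_edgeIndex (insert_subset hc hT))

lemma IsState.insert (h : IsState T 𝒪 𝒩 old new cs N) (hT : T ⊆ Ico 22 121)
    (hc : c ∈ Ico 22 121) (hcT : c ∉ T) :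
    IsState (insert c T) (evenSets (edges T))
      ((evenSets (edges T)).image (· ∆ fundamentalCycle c)) (old ++ new)
      ((old ++ new).map (· ^^^ mask edgeIndex (fundamentalCycle c)))
      (newMasks cs (mask edgeIndex (fundamentalCycle c)) (old ++ new) ++ cs)
      (N + (candidate (evenSets (edges T)) c).total) := by
  have hold : Encodes edgeIndex (old ++ new) (evenSets (edges T)) :=
    h.union_eq ▸ h.old.append h.new h.disjoint
  have hdisj := disjoint_circuits_newCircuits_edges hT hc hcT
  refine ⟨disjoint_evenSets_image_symmDiff (edge_notMem_edges hT hc hcT)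
    (edge_mem_fundamentalCycle hc), ?_, hold, ?_, ?_, ?_⟩
  · rw [edges_insert, evenSets_insert (isEven_fundamentalCycle hc) (edge_mem_fundamentalCycle hc)
      (fundamentalCycle_subset hc)]
  · exact hold.map_xor (injOn_edgeIndex (insert_subset hc hT))
      (fun D hD ↦ (mem_evenSets.1 hD).1.trans (edges_mono (subset_insert c T)))
      (edges_insert ▸ fundamentalCycle_subset hc)
  · rw [circuits_edges_insert hc, union_comm]
    exact (h.encodes_newMasks hT hc hcT hold Subset.rfl).append h.circuits hdisj.symm
  · rw [circuits_edges_insert hc, sizes_union hdisj, tally_add, h.total, candidate, add_assoc]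

lemma newCircuits_subset_circuits (hT : T ⊆ U) (hc : c ∈ Ico 22 121) (hcU : c ∈ U)
    (h𝒟 : 𝒟 ⊆ evenSets (edges T)) :
    newCircuits 𝒟 (fundamentalCycle c) ⊆ circuits (edges U) := by
  refine Subset.trans (fun C hC ↦ ?_) (circuits_mono (edges_mono (insert_subset hcU hT)))
  rw [circuits_edges_insert hc]
  rw [mem_newCircuits] at hC
  exact mem_union_right _ (mem_newCircuits.2 ⟨image_subset_image h𝒟 hC.1, hC.2⟩)

lemma IsState.update_candidate (h : IsState T 𝒪 𝒩 old new cs N) (hT : T ⊆ Ico 22 121)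
    (hc : c ∈ Ico 22 121) (hcT : c ∉ T) :
    (candidate 𝒪 c).update cs new = candidate (evenSets (edges T)) c := by
  have hnew := h.encodes_newMasks hT hc hcT h.new (h.union_eq ▸ subset_union_right)
  have sizes_eq := hnew.map_mod fun C hC ↦ card_lt_of_mem_circuits_edges
    (newCircuits_subset_circuits (subset_insert c T) hc (mem_insert_self c T)
      (h.union_eq ▸ subset_union_right) hC)
  rw [Candidate.update, candidate, maskTally, sizes_eq, ← tally_add,
    ← sizes_union (disjoint_newCircuits h.disjoint), ← newCircuits_union, h.union_eq, candidate]

lemma not_isCrowded_of_le {L L' : Multiset ℕ}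
    (hL' : ∀ l, L'.count l = if 4 ≤ l ∧ l ≤ 22 ∧ Even l then 2 else 0) (h : L ≤ L') :
    ¬IsCrowded (lengthOffset + tally L) := by
  refine not_isCrowded (fun l hl ↦ ?_) fun l ↦ ?_
  · have := Multiset.count_pos.2 (Multiset.mem_of_le h hl)
    grind
  · have := Multiset.count_le_of_le l h
    grind

lemma IsState.not_isCrowded (h : IsState T 𝒪 𝒩 old new cs N) (hU : U ⊆ Ico 22 121)
    (hcount : ∀ l, (sizes (Bipancyclic.circuits (edges U))).count l =
      if 4 ≤ l ∧ l ≤ 22 ∧ Even l then 2 else 0)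
    (hTU : T ⊆ U) (hcU : c ∈ U) (hcT : c ∉ T) {l : List ℕ}
    (hl : List.Sublist l (newMasks cs (mask edgeIndex (fundamentalCycle c)) new)) :
    ¬IsCrowded (N + ((candidate 𝒪 c).total + maskTally l)) := by
  have hT := hTU.trans hU
  have hc := hU hcU
  have hnew := h.encodes_newMasks hT hc hcT h.new (h.union_eq ▸ subset_union_right)
  have sizes_eq := hnew.map_mod fun C hC ↦ card_lt_of_mem_circuits_edges
    (newCircuits_subset_circuits hTU hc hcU (h.union_eq ▸ subset_union_right) hC)
  rw [h.total, candidate, maskTally, ← tally_add, add_assoc, ← tally_add]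
  refine not_isCrowded_of_le hcount ?_
  calc sizes (Bipancyclic.circuits (edges T)) +
        (sizes (newCircuits 𝒪 (fundamentalCycle c)) + (l.map (· % 31) : List ℕ))
      ≤ sizes (Bipancyclic.circuits (edges T)) + (sizes (newCircuits 𝒪 (fundamentalCycle c)) +
        sizes (newCircuits 𝒩 (fundamentalCycle c))) := by
        rw [← sizes_eq]
        gcongr
        exact (hl.map _).subperm
    _ = sizes (Bipancyclic.circuits (edges (Insert.insert c T))) := by
        rw [← sizes_union (disjoint_newCircuits h.disjoint), ← newCircuits_union, h.union_eq,
          ← sizes_union (disjoint_circuits_newCircuits_edges hT hc hcT), circuits_edges_insert hc]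
    _ ≤ sizes (Bipancyclic.circuits (edges U)) :=
        sizes_mono (circuits_mono (edges_mono (insert_subset hcU hTU)))

lemma exists_suffix_of_cons_sublist {α : Type*} {a : α} {l l' : List α}
    (h : (a :: l).Sublist l') : ∃ l'', a :: l'' <:+ l' ∧ l.Sublist l'' := by
  obtain ⟨r, s, rfl, ha, hl⟩ := List.cons_sublist_iff.1 h
  obtain ⟨p, q, rfl⟩ := List.append_of_mem ha
  exact ⟨q ++ s, ⟨p, by simp⟩, hl.trans (List.sublist_append_right q s)⟩

lemma IsState.exists_search_of_search_succ {P : List ℕ → Bool} {fuel : ℕ} {top : ℕ → Bool}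
    {chords rest : List ℕ} {candidates : List Candidate}
    (hstate : IsState chords.toFinset 𝒪 𝒩 old new cs N)
    (h : search P (fuel + 1) top chords old new cs N candidates = true) (htop : top c = true)
    (hrest : ((c :: rest).map (candidate 𝒪)).Sublist candidates)
    (hchords : chords.toFinset ⊆ U) (hrestU : ∀ d ∈ c :: rest, d ∈ U ∧ d ∉ chords.toFinset)
    (hU : U ⊆ Ico 22 121) (hcount : ∀ l, (sizes (Bipancyclic.circuits (edges U))).count l =
      if 4 ≤ l ∧ l ≤ 22 ∧ Even l then 2 else 0) :
    ∃ old' new' cs' N' candidates',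
      search P fuel (fun _ ↦ true) (c :: chords) old' new' cs' N' candidates' = true ∧
        (rest.map (candidate (evenSets (edges chords.toFinset)))).Sublist candidates' ∧
        IsState (c :: chords).toFinset (evenSets (edges chords.toFinset))
          ((evenSets (edges chords.toFinset)).image (· ∆ fundamentalCycle c)) old' new' cs' N' := by
  obtain ⟨l', hl', hsplit⟩ := exists_of_sieve hrest (List.forall_mem_map.2 fun d hd l hl ↦
    hstate.not_isCrowded hU hcount hchords (hrestU d hd).1 (hrestU d hd).2 hl) (search_succ h).2
  have update_eq : ((c :: rest).map (candidate 𝒪)).map (Candidate.update cs new) =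
      (c :: rest).map (candidate (evenSets (edges chords.toFinset))) := by
    rw [List.map_map]
    exact List.map_congr_left fun d hd ↦
      hstate.update_candidate (hchords.trans hU) (hU (hrestU d hd).1) (hrestU d hd).2
  rw [update_eq] at hl'
  obtain ⟨candidates', hsuffix, hsub⟩ := exists_suffix_of_cons_sublist hl'
  have hsearch := forallSplit_iff.1 hsplit _ _ hsuffix
  have htop_c : top (candidate (evenSets (edges chords.toFinset)) c).chord = true := htop
  rw [if_pos htop_c] at hsearch
  obtain ⟨hcU, hcT⟩ := hrestU c List.mem_cons_self
  have hstate' := hstate.insert (hchords.trans hU) (hU hcU) hcT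
  rw [← List.toFinset_cons] at hstate'
  exact ⟨_, _, _, _, _, hsearch, hsub, hstate'⟩

theorem apply_reverse_append_of_search {P : List ℕ → Bool} {fuel : ℕ} {top : ℕ → Bool}
    {chords rest : List ℕ} {candidates : List Candidate}
    (h : search P fuel top chords old new cs N candidates = true)
    (hfuel : rest.length < fuel) (htop : ∀ c ∈ rest.head?, top c = true)
    (hstate : IsState chords.toFinset 𝒪 𝒩 old new cs N)
    (hrest : (rest.map (candidate 𝒪)).Sublist candidates) (hnodup : (rest ++ chords).Nodup)
    (hU : (rest ++ chords).toFinset ⊆ Ico 22 121)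
    (hcount : ∀ l, (sizes (circuits (edges (rest ++ chords).toFinset))).count l =
      if 4 ≤ l ∧ l ≤ 22 ∧ Even l then 2 else 0) :
    P (rest.reverse ++ chords) = true := by
  induction fuel generalizing top chords rest old new cs N candidates 𝒪 𝒩 with
  | zero => simp at hfuel
  | succ fuel ih =>
    cases rest with
    | nil =>
      refine (search_succ h).1 ?_
      rw [hstate.total]
      exact lengthOffset_add_tally_eq_fullTally hcount
    | cons c rest =>
      have hchords : chords.toFinset ⊆ (c :: rest ++ chords).toFinset := by
        rw [List.toFinset_append]
        exact subset_union_right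
      have hrestU (d) (hd : d ∈ c :: rest) :
          d ∈ (c :: rest ++ chords).toFinset ∧ d ∉ chords.toFinset :=
        ⟨List.mem_toFinset.2 (List.mem_append_left _ hd),
          List.mem_toFinset.not.2 (List.disjoint_of_nodup_append hnodup hd)⟩
      obtain ⟨_, _, _, _, _, hsearch, hrest', hstate'⟩ :=
        hstate.exists_search_of_search_succ h (htop c rfl) hrest hchords hrestU hU hcount
      have hperm : (rest ++ c :: chords).Perm (c :: rest ++ chords) := List.perm_middle
      have toFinset_eq := List.toFinset_eq_of_perm _ _ hperm
      rw [List.reverse_cons, List.append_assoc]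
      exact ih hsearch (by simpa using hfuel) (fun _ _ ↦ rfl) hstate' hrest'
        (hperm.nodup_iff.2 hnodup) (toFinset_eq ▸ hU) (toFinset_eq ▸ hcount)

end Soundness

section Symmetries

/-- The symmetries of the bipartite Hamilton cycle: permutations of the vertices that map its edges
to its edges and the remaining pairs of opposite parity to each other. -/
structure IsSymmetry (g : Fin 22 ≃ Fin 22) : Prop where
  parity : ∀ v w : Fin 22, v.val % 2 ≠ w.val % 2 → (g v).val % 2 ≠ (g w).val % 2
  image_edges : (edges ∅).image (Sym2.map g) = edges ∅

/-- The index of the image under `g` of the edge with index `c`. -/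
def transport (g : Fin 22 ≃ Fin 22) (c : ℕ) : ℕ := edgeIndex ((edge c).map g)

variable {S : Finset ℕ} {g : Fin 22 ≃ Fin 22}

lemma isSymmetry_addRight : ∀ x : Fin 22, IsSymmetry (Equiv.addRight x) := by
  have parity : ∀ x v w : Fin 22, v.val % 2 ≠ w.val % 2 → (v + x).val % 2 ≠ (w + x).val % 2 := by
    simp only [Fin.val_add]
    lia
  have image_edges : ∀ x, (edges ∅).image (Sym2.map (Equiv.addRight x)) = edges ∅ := by
    decide +kernel
  exact fun x ↦ ⟨parity x, image_edges x⟩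

lemma isSymmetry_subLeft : ∀ x : Fin 22, IsSymmetry (Equiv.subLeft x) := by
  have parity : ∀ x v w : Fin 22, v.val % 2 ≠ w.val % 2 → (x - v).val % 2 ≠ (x - w).val % 2 := by
    simp only [Fin.val_sub]
    omega
  have image_edges : ∀ x, (edges ∅).image (Sym2.map (Equiv.subLeft x)) = edges ∅ := by
    decide +kernel
  exact fun x ↦ ⟨parity x, image_edges x⟩

lemma IsSymmetry.edge_transport (hg : IsSymmetry g) (c : ℕ) :
    edge (transport g c) = (edge c).map g := by
  refine (edge_edgeIndex _ _ (hg.parity _ _ ?_)).2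
  simp only [Fin.val_ofNat]
  lia

lemma IsSymmetry.edges_image_transport (hg : IsSymmetry g) :
    edges (S.image (transport g)) = (edges S).image (Sym2.map g) := by
  have edges_eq (S : Finset ℕ) : edges S = edges ∅ ∪ S.image edge := by
    rw [edges, edges, image_union, union_empty]
  rw [edges_eq, edges_eq S, image_union, hg.image_edges, image_image, image_image]
  simp only [Function.comp_def, hg.edge_transport]

lemma IsSymmetry.nonempty_iso (hg : IsSymmetry g) :
    Nonempty (graph S ≃g graph (S.image (transport g))) := by
  refine ⟨⟨g, fun {v w} ↦ ?_⟩⟩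
  rw [← mem_edgeSet, ← mem_edgeSet, ← edgeSet_graph, ← edgeSet_graph, mem_coe, mem_coe,
    hg.edges_image_transport, ← Sym2.map_mk]
  exact (Sym2.map.injective g.injective).mem_finset_image

lemma transport_addRight_div : ∀ c < 121, ∀ x,
    transport (Equiv.addRight x) c / 22 = c / 22 ∧ transport (Equiv.addRight x) c < 121 := by
  decide +kernel

end Symmetries

section SearchResult

/-- The chords of the `i`-th graph: two chords of span nine that differ by one rotation step, a
chord of span five that shares an end with the first of them, and a chord of span three, which is
the same for all `i`. -/
def chordList (i : ℕ) : List ℕ := [22, 47 + i, 91 + i, 92 + i]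

/-- Up to rotation and reflection, `chords` is `chordList i` for some `i < 10`. -/
def isListed (chords : List ℕ) : Bool :=
  (List.finRange 22).any fun x ↦ [Equiv.addRight x, Equiv.subLeft x].any fun g ↦
    (List.range 10).any fun i ↦ (chords.map (transport g)).isPerm (chordList i)

lemma exists_iso_of_isListed {S : Finset ℕ} {chords : List ℕ} (h : isListed chords)
    (hS : chords.toFinset = S) :
    ∃ i < 10, Nonempty (graph S ≃g graph (chordList i).toFinset) := by
  simp only [isListed, List.any_eq_true, List.mem_range, List.isPerm_iff, List.mem_cons,
    List.not_mem_nil, or_false] at h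
  obtain ⟨x, -, g, hg, i, hi, hperm⟩ := h
  have image_eq : S.image (transport g) = (chordList i).toFinset := by
    rw [← List.toFinset_eq_of_perm _ _ hperm, ← hS]
    ext c
    simp
  refine ⟨i, hi, image_eq ▸ IsSymmetry.nonempty_iso ?_⟩
  rcases hg with rfl | rfl
  exacts [isSymmetry_addRight x, isSymmetry_subLeft x]

/-- The index `c` is the largest one among the rotations of the chord. -/
def isTop (c : ℕ) : Bool := c % 22 == 21 || c == 120

/-- `k (chords.map (candidate ∅))`, with the entries evaluated. -/
noncomputable def withCandidates {α : Type*} : List ℕ → (k : List Candidate → α) → α :=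
  fold (fun c r k ↦ withValue c fun c ↦ withValue (mask edgeIndex (fundamentalCycle c)) fun m ↦
    r fun l ↦ k (⟨c, m, 0⟩ :: l)) fun k ↦ k []

lemma withCandidates_eq {α : Type*} (chords : List ℕ) (k : List Candidate → α) :
    withCandidates chords k = k (chords.map (candidate ∅)) := by
  induction chords generalizing k with
  | nil => rfl
  | cons c chords ih =>
    have candidate_eq : candidate ∅ c = ⟨c, mask edgeIndex (fundamentalCycle c), 0⟩ := rfl
    rw [List.map_cons, candidate_eq, ← ih fun l ↦ k (_ :: l)]
    simp only [withCandidates, fold_cons, withValue_eq]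

lemma search_chords : (withCandidates (List.range' 22 99).reverse fun candidates ↦
    withValue (mask edgeIndex (edges ∅)) fun h ↦
      search isListed 6 isTop [] [] [0, h] [h] (lengthOffset + 8 ^ 22) candidates) = true := by
  decide +kernel

lemma isState_empty {h : ℕ} (hh : mask edgeIndex (edges ∅) = h) :
    IsState ∅ ∅ {∅, edges ∅} [] [0, h] [h] (lengthOffset + 8 ^ 22) where
  disjoint := disjoint_empty_left _
  union_eq := by rw [empty_union, evenSets_edges_empty]
  old := rfl
  new := by
    have ne : ∅ ∉ ({edges ∅} : Finset (Finset (Sym2 (Fin 22)))) := by decide +kernel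
    rw [Encodes, insert_val_of_notMem ne, singleton_val, Multiset.map_cons,
      Multiset.map_singleton, hh]
    rfl
  circuits := by
    rw [Encodes, circuits_edges_empty, singleton_val, Multiset.map_singleton, hh]
    rfl
  total := by
    have card_eq : #(edges ∅) = 22 := by decide +kernel
    rw [circuits_edges_empty, sizes, singleton_val, Multiset.map_singleton, card_eq, tally,
      Multiset.map_singleton, Multiset.sum_singleton]

lemma exists_iso_of_isTop {S : Finset ℕ} (hS : S ⊆ Ico 22 121) (hcard : #S ≤ 5)
    (hpan : IsRBipancyclic (graph S) 2) (htop : ∀ c ∈ S, (∀ d ∈ S, d ≤ c) → isTop c) :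
    ∃ i < 10, Nonempty (graph S ≃g graph (chordList i).toFinset) := by
  set chords := (List.range' 22 99).reverse
  have decreasing : chords.Pairwise (· > ·) := List.pairwise_reverse.2 List.pairwise_lt_range'
  set rest := chords.filter (· ∈ S)
  have mem_rest {c} : c ∈ rest ↔ c ∈ S := by
    have := @hS c
    simp only [rest, chords, List.mem_filter, List.mem_reverse, List.mem_range'_1]
    grind
  have toFinset_rest : rest.toFinset = S := by
    ext c
    rw [List.mem_toFinset, mem_rest]
  have rest_nodup : rest.Nodup := decreasing.filter _ |>.imp ne_of_gt
  have htop_rest : ∀ c ∈ rest.head?, isTop c = true := by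
    intro c hc
    refine htop c (mem_rest.1 (List.mem_of_mem_head? hc)) fun d hd ↦ ?_
    have pairwise_rest : rest.Pairwise (· > ·) := decreasing.filter _
    rw [← mem_rest] at hd
    rw [List.eq_cons_of_mem_head? hc] at hd pairwise_rest
    exact (List.mem_cons.1 hd).elim le_of_eq fun hd ↦
      (List.rel_of_pairwise_cons pairwise_rest hd).le
  have hsearch := search_chords
  rw [withCandidates_eq, withValue_eq] at hsearch
  have h := apply_reverse_append_of_search (rest := rest) hsearch ?_ htop_rest (isState_empty rfl)
    (List.filter_sublist.map _)
  · simp only [List.append_nil, toFinset_rest] at h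
    exact exists_iso_of_isListed (h rest_nodup hS
      ((isRBipancyclic_iff_count_sizes_circuits (edgeSet_graph S)).1 hpan).2.2.2)
      (by rw [List.toFinset_reverse, toFinset_rest])
  · rw [← List.toFinset_card_of_nodup rest_nodup, toFinset_rest]
    omega

lemma exists_isTop_transport :
    ∀ c < 121, 22 ≤ c → ∃ x, isTop (transport (Equiv.addRight x) c) := by
  decide +kernel

lemma exists_forall_max_isTop {S : Finset ℕ} (hS : S ⊆ Ico 22 121) :
    ∃ x, ∀ c ∈ S.image (transport (Equiv.addRight x)),
      (∀ d ∈ S.image (transport (Equiv.addRight x)), d ≤ c) → isTop c := by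
  obtain rfl | hne := S.eq_empty_or_nonempty
  · exact ⟨0, by simp⟩
  obtain ⟨x, hx⟩ := exists_isTop_transport _ (mem_Ico.1 (hS (S.max'_mem hne))).2
    (mem_Ico.1 (hS (S.max'_mem hne))).1
  refine ⟨x, forall_mem_image.2 fun c hc hmax ↦ ?_⟩
  have le_max := S.le_max' c hc
  have le := hmax _ (mem_image_of_mem _ (S.max'_mem hne))
  have div_c := transport_addRight_div c (mem_Ico.1 (hS hc)).2 x
  have div_max := transport_addRight_div _ (mem_Ico.1 (hS (S.max'_mem hne))).2 x
  simp only [isTop, Bool.or_eq_true, beq_iff_eq] at hx ⊢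
  omega

theorem exists_iso_of_isRBipancyclic_graph {S : Finset ℕ} (hS : S ⊆ Ico 22 121) (hcard : #S ≤ 5)
    (hpan : IsRBipancyclic (graph S) 2) :
    ∃ i < 10, Nonempty (graph S ≃g graph (chordList i).toFinset) := by
  obtain ⟨x, htop⟩ := exists_forall_max_isTop hS
  obtain ⟨e⟩ := (isSymmetry_addRight x).nonempty_iso (S := S)
  have image_subset : S.image (transport (Equiv.addRight x)) ⊆ Ico 22 121 := by
    refine image_subset_iff.2 fun c hc ↦ ?_
    have := mem_Ico.1 (hS hc)
    have := transport_addRight_div c this.2 x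
    rw [mem_Ico]
    omega
  obtain ⟨i, hi, ⟨e'⟩⟩ := exists_iso_of_isTop image_subset (card_image_le.trans hcard)
    (isRBipancyclic_congr e hpan) htop
  exact ⟨i, hi, ⟨e.trans e'⟩⟩

end SearchResult

section NormalForm

variable {H : SimpleGraph (Fin 22)} {S : Finset ℕ}

lemma mod_two_ne_of_adj (hcycle : (edges ∅ : Set (Sym2 (Fin 22))) ⊆ H.edgeSet)
    (hcol : H.Colorable 2) {v w : Fin 22} (h : H.Adj v w) : v.val % 2 ≠ w.val % 2 := by
  obtain ⟨C⟩ := hcol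
  have color_eq (n : ℕ) : (C (Fin.ofNat 22 n)).val = ((C 0).val + n) % 2 := by
    induction n with
    | zero => exact (Nat.mod_eq_of_lt (C 0).isLt).symm
    | succ n ih =>
      have edge_eq : edge (n % 22) = s(Fin.ofNat 22 n, Fin.ofNat 22 (n + 1)) := by
        simp [edge, Nat.mod_div_self, Fin.ext_iff]
      have hadj : H.Adj (Fin.ofNat 22 n) (Fin.ofNat 22 (n + 1)) :=
        hcycle (mem_edges.2 ⟨n % 22, .inl (Nat.mod_lt _ (by simp)), edge_eq⟩)
      have := Fin.val_ne_of_ne (C.valid hadj)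
      lia
  have hne := Fin.val_ne_of_ne (C.valid h)
  have hv := color_eq v
  have hw := color_eq w
  rw [Fin.ofNat_eq_cast, Fin.cast_val_eq_self] at hv hw
  lia

lemma exists_graph_eq (hcycle : (edges ∅ : Set (Sym2 (Fin 22))) ⊆ H.edgeSet)
    (hcol : H.Colorable 2) : ∃ S ⊆ Ico 22 121, graph S = H := by
  classical
  set S := {c ∈ Ico 22 121 | edge c ∈ H.edgeSet} with hS
  suffices edges_eq : (edges S : Set (Sym2 (Fin 22))) = H.edgeSet from
    ⟨S, filter_subset _ _, by rw [graph, edges_eq, fromEdgeSet_edgeSet]⟩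
  ext e
  rw [mem_coe, mem_edges]
  constructor
  · rintro ⟨i, hi | hi, rfl⟩
    · exact hcycle (mem_edges.2 ⟨i, .inl hi, rfl⟩)
    · exact (mem_filter.1 hi).2
  · intro he
    induction e with | _ v w =>
    obtain ⟨hlt, hedge⟩ := edge_edgeIndex v w (mod_two_ne_of_adj hcycle hcol he)
    refine ⟨edgeIndex s(v, w), ?_, hedge⟩
    rw [hS, mem_filter, mem_Ico, hedge]
    exact (lt_or_ge (edgeIndex s(v, w)) 22).imp_right fun hge ↦ ⟨⟨hge, hlt⟩, he⟩

lemma injOn_edge (hS : S ⊆ Ico 22 121) : Set.InjOn edge (range 22 ∪ S : Finset ℕ) := by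
  refine Set.LeftInvOn.injOn (f₁' := edgeIndex) fun i hi ↦ edgeIndex_edge i ?_
  have := @hS i
  grind

lemma ncard_edgeSet_graph (hS : S ⊆ Ico 22 121) : (graph S).edgeSet.ncard = 22 + #S := by
  have hdisj : Disjoint (range 22) S :=
    Finset.disjoint_left.2 fun i hi hiS ↦ by have := @hS i; grind
  rw [← edgeSet_graph, Set.ncard_coe_finset, edges, card_image_of_injOn (injOn_edge hS),
    card_union_of_disjoint hdisj, card_range]

theorem exists_iso_graph {W : Type*} [Fintype W] {G : SimpleGraph W} (hcard : Fintype.card W = 22)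
    (hcol : G.Colorable 2) (hcycle : cycleCount G 22 ≠ 0) :
    ∃ S ⊆ Ico 22 121, Nonempty (G ≃g graph S) := by
  classical
  rw [cycleCount_add_three_eq_ncard_cycleEdgeSets G 19] at hcycle
  obtain ⟨_, ⟨f, hf, rfl⟩, hG⟩ := Set.nonempty_of_ncard_ne_zero hcycle
  have hf_bij : f.Bijective :=
    (Fintype.bijective_iff_injective_and_card f).2 ⟨hf, by rw [hcard, Fintype.card_fin]⟩
  let e : G.comap f ≃g G := Iso.comap (Equiv.ofBijective f hf_bij) G
  have edges_subset : (edges ∅ : Set (Sym2 (Fin 22))) ⊆ (G.comap f).edgeSet := by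
    rw [edges_empty]
    intro x hx
    obtain ⟨i, rfl⟩ := mem_cycleEdges.1 hx
    exact hG (mem_cycleEdges.2 ⟨i, rfl⟩)
  obtain ⟨S, hS, hgraph⟩ := exists_graph_eq edges_subset (hcol.of_hom e.toHom)
  exact ⟨S, hS, ⟨hgraph ▸ e.symm⟩⟩

lemma ncard_edgeSet_congr {V W : Type*} {G : SimpleGraph V} {H : SimpleGraph W} (e : G ≃g H) :
    G.edgeSet.ncard = H.edgeSet.ncard :=
  Nat.card_congr e.mapEdgeSet

theorem exists_iso_chordList {W : Type*} [Fintype W] {G : SimpleGraph W}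
    (hcard : Fintype.card W = 22) (hedges : G.edgeSet.ncard ≤ 27) (hpan : IsRBipancyclic G 2) :
    ∃ i < 10, Nonempty (G ≃g graph (chordList i).toFinset) := by
  have hcycle : cycleCount G 22 ≠ 0 := by
    rw [hpan.2.2.2 22 (by simp) hcard.ge (by decide)]
    simp
  obtain ⟨S, hS, ⟨e⟩⟩ := exists_iso_graph hcard hpan.1 hcycle
  rw [ncard_edgeSet_congr e, ncard_edgeSet_graph hS] at hedges
  obtain ⟨i, hi, ⟨e'⟩⟩ :=
    exists_iso_of_isRBipancyclic_graph hS (by lia) (isRBipancyclic_congr e hpan)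
  exact ⟨i, hi, ⟨e.trans e'⟩⟩

end NormalForm

section Listed

/-- The masks of the even sets of the Hamilton cycle with the given chords. -/
noncomputable def evenMasks : List ℕ → List ℕ :=
  fold (fun c l ↦ l ++ l.map (· ^^^ mask edgeIndex (fundamentalCycle c)))
    [0, mask edgeIndex (edges ∅)]

/-- The masks of the circuits of the Hamilton cycle with the given chords. -/
noncomputable def circuitMasks : List ℕ → List ℕ
  | [] => [mask edgeIndex (edges ∅)]
  | c :: chords => newMasks (circuitMasks chords) (mask edgeIndex (fundamentalCycle c))
      (evenMasks chords) ++ circuitMasks chords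

lemma exists_isState {chords : List ℕ} (hnodup : chords.Nodup)
    (hchords : chords.toFinset ⊆ Ico 22 121) : ∃ 𝒪 𝒩 old new N,
      old ++ new = evenMasks chords ∧
        IsState chords.toFinset 𝒪 𝒩 old new (circuitMasks chords) N := by
  induction chords with
  | nil => exact ⟨_, _, [], _, _, rfl, isState_empty rfl⟩
  | cons c chords ih =>
    rw [List.toFinset_cons, insert_subset_iff] at hchords
    rw [List.nodup_cons, ← List.mem_toFinset] at hnodup
    obtain ⟨𝒪, 𝒩, old, new, N, hmasks, h⟩ := ih hnodup.2 hchords.2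
    have h' := h.insert hchords.2 hchords.1 hnodup.1
    rw [hmasks, ← List.toFinset_cons] at h'
    exact ⟨_, _, _, _, _, rfl, h'⟩

lemma circuitMasks_chordList : ∀ i < 10, ((circuitMasks (chordList i)).map (· % 31) : Multiset ℕ) =
    2 • ({l ∈ Icc 4 22 | Even l} : Finset ℕ).val := by
  decide +kernel

lemma nodup_chordList : ∀ i < 10, (chordList i).Nodup := by decide

lemma toFinset_chordList_subset : ∀ i < 10, (chordList i).toFinset ⊆ Ico 22 121 := by
  decide +kernel

theorem isRBipancyclic_graph_chordList {i : ℕ} (hi : i < 10) :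
    IsRBipancyclic (graph (chordList i).toFinset) 2 := by
  refine (isRBipancyclic_iff_count_sizes_circuits (edgeSet_graph _)).2
    ⟨colorable_graph _, by decide, by decide, fun l ↦ ?_⟩
  obtain ⟨𝒪, 𝒩, old, new, N, -, h⟩ :=
    exists_isState (nodup_chordList i hi) (toFinset_chordList_subset i hi)
  rw [← h.circuits.map_mod fun C hC ↦ card_lt_of_mem_circuits_edges hC, circuitMasks_chordList i hi,
    Multiset.count_nsmul, Multiset.count_eq_of_nodup (nodup _)]
  simp [and_assoc]

end Listed

section Walks

variable {V W : Type*} [Fintype V] [Fintype W]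

open scoped Classical in
/-- The adjacency operator of `G`. -/
noncomputable def neighborSum (G : SimpleGraph V) (f : V → ℕ) (v : V) : ℕ := ∑ w with G.Adj v w, f w

/-- The number of walks of length `n` in `G`, as the sum of the entries of the `n`-th power of the
adjacency matrix. -/
noncomputable def walkCount (G : SimpleGraph V) (n : ℕ) : ℕ := ∑ v, (neighborSum G)^[n] 1 v

lemma walkCount_congr {G : SimpleGraph V} {H : SimpleGraph W} (e : G ≃g H) (n : ℕ) :
    walkCount G n = walkCount H n := by
  have semiconj : Function.Semiconj (· ∘ e) (neighborSum H) (neighborSum G) := by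
    refine fun f ↦ funext fun v ↦ (sum_equiv e.toEquiv (fun w ↦ ?_) fun w _ ↦ rfl).symm
    simp [e.map_adj_iff]
  refine Fintype.sum_equiv e.toEquiv _ _ fun v ↦ ?_
  exact congrFun (semiconj.iterate_right n 1).symm v

/-- The contribution of the edge with index `i` to `neighborSum f v`. -/
def edgeTerm (f : Fin 22 → ℕ) (v : Fin 22) (i : ℕ) : ℕ :=
  (if Fin.ofNat 22 i = v then f (Fin.ofNat 22 (i + 2 * (i / 22) + 1)) else 0) +
    if Fin.ofNat 22 (i + 2 * (i / 22) + 1) = v then f (Fin.ofNat 22 i) else 0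

lemma edgeTerm_eq_sum (f : Fin 22 → ℕ) (v : Fin 22) (i : ℕ) :
    edgeTerm f v i = ∑ w, if s(v, w) = edge i then f w else 0 := by
  have ne : Fin.ofNat 22 i ≠ Fin.ofNat 22 (i + 2 * (i / 22) + 1) := by
    simp only [Ne, Fin.ext_iff, Fin.val_ofNat]
    lia
  rw [edgeTerm, edge]
  generalize Fin.ofNat 22 i = a at *
  generalize Fin.ofNat 22 (i + 2 * (i / 22) + 1) = b at *
  have split (w) : (if s(v, w) = s(a, b) then f w else 0) =
      (if b = w then if a = v then f b else 0 else 0) +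
        if a = w then if b = v then f a else 0 else 0 := by
    grind
  simp only [split, sum_add_distrib, sum_ite_eq, mem_univ, if_true]

lemma neighborSum_graph {S : Finset ℕ} (hS : S ⊆ Ico 22 121) (f : Fin 22 → ℕ) (v : Fin 22) :
    neighborSum (graph S) f v = ∑ i ∈ range 22 ∪ S, edgeTerm f v i := by
  classical
  have adj_iff (w) : (graph S).Adj v w ↔ s(v, w) ∈ edges S := by
    rw [← mem_coe, edgeSet_graph, mem_edgeSet]
  simp only [neighborSum, adj_iff, edgeTerm_eq_sum]
  rw [sum_comm, sum_filter]
  refine sum_congr rfl fun w _ ↦ ?_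
  rw [← sum_image (g := edge) (f := fun e ↦ if s(v, w) = e then f w else 0) (injOn_edge hS),
    ← edges, sum_ite_eq]

/-- The sum of the values of `(neighborSum G)^[n] f`, where `G` is the Hamilton cycle with the given
chords and `values` lists the values of `f`. -/
noncomputable def iterateSum (chords : List ℕ) (n : ℕ) (values : List ℕ) : ℕ :=
  Nat.rec (motive := fun _ ↦ List ℕ → ℕ) List.sum (fun _ r values ↦
    withMap (fun v : Fin 22 ↦ ((List.range 22 ++ chords).map (edgeTerm (values.getD · 0) v)).sum)
      (List.finRange 22) r) n values

lemma iterateSum_eq {chords : List ℕ} (hnodup : chords.Nodup)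
    (hchords : chords.toFinset ⊆ Ico 22 121) (n : ℕ) (f : Fin 22 → ℕ) :
    iterateSum chords n ((List.finRange 22).map f) =
      ∑ v, (neighborSum (graph chords.toFinset))^[n] f v := by
  induction n generalizing f with
  | zero => exact (Fin.sum_univ_def f).symm
  | succ n ih =>
    rw [Function.iterate_succ_apply, ← ih]
    refine (withMap_eq _ _ _).trans (congrArg (iterateSum chords n) ?_)
    refine List.map_congr_left fun v _ ↦ ?_
    have nodup_append : (List.range 22 ++ chords).Nodup := by
      refine List.nodup_range.append hnodup fun i hi hic ↦ ?_
      have hi_chord := mem_Ico.1 (hchords (List.mem_toFinset.2 hic))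
      exact absurd (List.mem_range.1 hi) hi_chord.1.not_gt
    have toFinset_append : (List.range 22 ++ chords).toFinset = range 22 ∪ chords.toFinset := by
      rw [List.toFinset_append, List.toFinset_range]
    rw [neighborSum_graph hchords, ← toFinset_append, List.sum_toFinset _ nodup_append]
    simp

lemma iterateSum_chordList :
    (List.range 10).map (fun i ↦ iterateSum (chordList i) 6 (List.replicate 22 1)) =
      [7538, 6210, 5854, 5754, 5732, 5730, 5742, 5800, 6014, 6790] := by
  decide +kernel

lemma isEmpty_iso_graph_chordList {i j : ℕ} (hi : i < 10) (hj : j < 10) (hij : i ≠ j) :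
    IsEmpty (graph (chordList i).toFinset ≃g graph (chordList j).toFinset) := by
  have walkCount_eq {k : ℕ} (hk : k < 10) : walkCount (graph (chordList k).toFinset) 6 =
      iterateSum (chordList k) 6 (List.replicate 22 1) := by
    exact (iterateSum_eq (nodup_chordList k hk) (toFinset_chordList_subset k hk) 6 1).symm
  have nodup : ((List.range 10).map fun k ↦
      iterateSum (chordList k) 6 (List.replicate 22 1)).Nodup := by
    rw [iterateSum_chordList]
    decide
  refine ⟨fun e ↦ hij <| List.inj_on_of_nodup_map nodup (List.mem_range.2 hi)
    (List.mem_range.2 hj) ?_⟩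
  rw [← walkCount_eq hi, ← walkCount_eq hj, walkCount_congr e]

end Walks

end Bipancyclic

theorem two_bipancyclic_count_order_22 : ExactlyNUpToIso 2 10 22 27 := by
  refine ⟨fun i ↦ Bipancyclic.graph (Bipancyclic.chordList i).toFinset, ?_, ?_, ?_⟩
  · intro i j hij
    exact Bipancyclic.isEmpty_iso_graph_chordList i.2 j.2 (Fin.val_ne_of_ne hij)
  · intro i
    refine ⟨Bipancyclic.isRBipancyclic_graph_chordList i.2, ?_⟩
    rw [Bipancyclic.ncard_edgeSet_graph (Bipancyclic.toFinset_chordList_subset i i.2),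
      List.toFinset_card_of_nodup (Bipancyclic.nodup_chordList i i.2)]
    exact Nat.le_succ 26
  · intro W _ G hcard hedges hpan
    obtain ⟨i, hi, hiso⟩ := Bipancyclic.exists_iso_chordList hcard hedges hpan
    exact ⟨⟨i, hi⟩, hiso⟩
end
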